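/- Let σ be a signature, let r be the maximum arity among all relations in σ, and let k ≥ 1 with r ≤ k. Then for every pair of σ-structures 𝐀, 𝐁 the following are equivalent: (1) 𝐀 ≡_k 𝐁; (2) Hom(𝐐;𝐀) = Hom(𝐐;𝐁) for every σ-structure 𝐐 of treewidth strictly less than k. -/

import Mathlib

attribute [local instance] Classical.propDecidable

set_option maxHeartbeats 1000000

noncomputable section

/-- A relational structure over the signature given by symbols `σ` with arities `ar`,
with universe `A`: for each relation symbol, a set of tuples. -/
structure Struct (σ : Type) (ar : σ → ℕ) (A : Type) : Type where
  rel : ∀ R : σ, Set (Fin (ar R) → A)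

variable {σ : Type} {ar : σ → ℕ}

/-- The set of constraints of a structure: pairs `(R, 𝐚)` with `𝐚 ∈ R(AA)`. -/
def Cons {A : Type} (AA : Struct σ ar A) : Type :=
  Σ R : σ, {u : Fin (ar R) → A // u ∈ AA.rel R}

instance Cons.finite {A : Type} [Finite σ] [Finite A] {AA : Struct σ ar A} :
    Finite (Cons AA) :=
  inferInstanceAs (Finite (Σ R : σ, {u : Fin (ar R) → A // u ∈ AA.rel R}))

noncomputable instance Cons.fintype {A : Type} [Fintype σ] [Fintype A] {AA : Struct σ ar A} :
    Fintype (Cons AA) := Fintype.ofFinite _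

/-- Labels `(S, R)` with `R ∈ σ` and `S ⊆ [arity R]`. -/
abbrev Label (σ : Type) (ar : σ → ℕ) : Type := Σ R : σ, Finset (Fin (ar R))

/-- The entry of the matrix representation `M_AA` of a structure at `(a, R(𝐚))`:
the label `(S, R)` with `S = {i : 𝐚[i] = a}`. -/
def lab {A : Type} (AA : Struct σ ar A) (a : A) (c : Cons AA) : Label σ ar :=
  ⟨c.1, Finset.univ.filter fun i => c.2.1 i = a⟩

/-- The 0/1 matrix `M_AA^ℓ`. -/
def labMat {A : Type} (AA : Struct σ ar A) (ℓ : Label σ ar) : Matrix A (Cons AA) ℝ :=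
  fun a c => if lab AA a c = ℓ then 1 else 0

/-- A doubly stochastic matrix: non-negative entries, all rows and all columns sum to 1. -/
def IsDoublyStochastic {α β : Type} [Fintype α] [Fintype β] (X : Matrix α β ℝ) : Prop :=
  (∀ i j, 0 ≤ X i j) ∧ (∀ i, ∑ j, X i j = 1) ∧ (∀ j, ∑ i, X i j = 1)

/-- A left stochastic matrix: non-negative entries, all columns sum to 1. -/
def IsLeftStochastic {α β : Type} [Fintype α] (X : Matrix α β ℝ) : Prop :=
  (∀ i j, 0 ≤ X i j) ∧ (∀ j, ∑ i, X i j = 1)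

/-- Fractional isomorphism: doubly stochastic `X`, `Y` with
`X M_AA^ℓ = M_BB^ℓ Y` and `M_AA^ℓ Yᵀ = Xᵀ M_BB^ℓ` for every label `ℓ`. -/
def FracIso {A B : Type} [Fintype σ] [Fintype A] [Fintype B]
    (AA : Struct σ ar A) (BB : Struct σ ar B) : Prop :=
  ∃ (X : Matrix B A ℝ) (Y : Matrix (Cons BB) (Cons AA) ℝ),
    IsDoublyStochastic X ∧ IsDoublyStochastic Y ∧
    ∀ ℓ : Label σ ar,
      X * labMat AA ℓ = labMat BB ℓ * Y ∧
      labMat AA ℓ * Y.transpose = X.transpose * labMat BB ℓ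

/-- The type of iterated degrees of depth `k`. -/
def DegT (L : Type) : ℕ → Type
  | 0 => Bool
  | k + 1 => Multiset (L × DegT L k)

/-- The iterated degree `δ_k` of an element or a constraint of a structure. -/
def iterDeg {A : Type} [Fintype σ] [Fintype A] (AA : Struct σ ar A) :
    (k : ℕ) → A ⊕ Cons AA → DegT (Label σ ar) k
  | 0, x => x.isLeft
  | k + 1, Sum.inl a =>
      (Finset.univ.val.map fun c : Cons AA => (lab AA a c, iterDeg AA k (Sum.inr c)) :
        Multiset (Label σ ar × DegT (Label σ ar) k))
  | k + 1, Sum.inr c =>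
      (Finset.univ.val.map fun a : A => (lab AA a c, iterDeg AA k (Sum.inl a)) :
        Multiset (Label σ ar × DegT (Label σ ar) k))

/-- Two structures have the same iterated degree sequence. -/
def SameIterDeg {A B : Type} [Fintype σ] [Fintype A] [Fintype B]
    (AA : Struct σ ar A) (BB : Struct σ ar B) : Prop :=
  ∀ k : ℕ,
    Multiset.map (iterDeg AA k) (Finset.univ.val : Multiset (A ⊕ Cons AA)) =
    Multiset.map (iterDeg BB k) (Finset.univ.val : Multiset (B ⊕ Cons BB))
/-- An equitable partition of a structure, given by index maps `p` (on the universe)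
and `q` (on the constraints) together with its parameters `cpar`, `dpar`. -/
def IsEquitable {A : Type} (AA : Struct σ ar A) {I : Type u} {J : Type v}
    (p : A → I) (q : Cons AA → J)
    (cpar : Label σ ar → I → J → ℕ) (dpar : Label σ ar → J → I → ℕ) : Prop :=
  (∀ (a : A) (ℓ : Label σ ar) (j : J),
      Nat.card {c : Cons AA // q c = j ∧ lab AA a c = ℓ} = cpar ℓ (p a) j) ∧
  (∀ (c : Cons AA) (ℓ : Label σ ar) (i : I),
      Nat.card {a : A // p a = i ∧ lab AA a c = ℓ} = dpar ℓ (q c) i)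

/-- Two structures have a common equitable partition: equitable partitions with the same
index sets, the same parameters, and corresponding classes of equal sizes. -/
def CommonEquitable {A B : Type} (AA : Struct σ ar A) (BB : Struct σ ar B) : Prop :=
  ∃ (I J : Type) (pA : A → I) (qA : Cons AA → J) (pB : B → I) (qB : Cons BB → J)
    (cpar : Label σ ar → I → J → ℕ) (dpar : Label σ ar → J → I → ℕ),
    IsEquitable AA pA qA cpar dpar ∧ IsEquitable BB pB qB cpar dpar ∧
    (∀ i : I, Nat.card {a : A // pA a = i} = Nat.card {b : B // pB b = i}) ∧
    (∀ j : J, Nat.card {c : Cons AA // qA c = j} = Nat.card {c : Cons BB // qB c = j})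

/-- `h` is a homomorphism from `AA` to `BB`. -/
def IsHom {A B : Type} (AA : Struct σ ar A) (BB : Struct σ ar B) (h : A → B) : Prop :=
  ∀ (R : σ) (u : Fin (ar R) → A), u ∈ AA.rel R → (fun i => h (u i)) ∈ BB.rel R

/-- The number of homomorphisms from `AA` to `BB`. -/
def homCount {A B : Type} (AA : Struct σ ar A) (BB : Struct σ ar B) : ℕ :=
  Nat.card {h : A → B // IsHom AA BB h}

/-- The number of homomorphisms from `(TT, t)` to `(DD, d)` (with a designated element). -/
def rhomCount {T D : Type} (TT : Struct σ ar T) (t : T) (DD : Struct σ ar D) (d : D) : ℕ :=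
  Nat.card {h : T → D // IsHom TT DD h ∧ h t = d}

/-- The factor graph of a structure: bipartite graph on elements and constraints. -/
def factorGraph {A : Type} (AA : Struct σ ar A) : SimpleGraph (A ⊕ Cons AA) :=
  SimpleGraph.fromRel fun x y =>
    ∃ (a : A) (c : Cons AA), x = Sum.inl a ∧ y = Sum.inr c ∧ ∃ i, c.2.1 i = a

/-- A structure is an ftree if its factor graph is a tree. -/
def IsFtree {A : Type} (AA : Struct σ ar A) : Prop := (factorGraph AA).IsTree
/-- The set `{𝐚}` of elements occurring in the tuple of a constraint, as a Finset. -/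
def tsupp {A : Type} {AA : Struct σ ar A} (c : Cons AA) : Finset A :=
  Finset.univ.image c.2.1

lemma mem_tsupp {A : Type} {AA : Struct σ ar A} (c : Cons AA) (i : Fin (ar c.1)) :
    c.2.1 i ∈ tsupp c :=
  Finset.mem_image_of_mem _ (Finset.mem_univ i)

/-- Feasibility of the system `SA^k(AA, BB)`. -/
def SAfeasible {A B : Type} [Fintype B] (k : ℕ)
    (AA : Struct σ ar A) (BB : Struct σ ar B) : Prop :=
  ∃ (pV : (V : Finset A) → ({x // x ∈ V} → B) → ℝ)
    (pC : (c : Cons AA) → ({x // x ∈ tsupp c} → B) → ℝ),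
    -- all variables take values in [0,1]
    (∀ (V : Finset A) (f : {x // x ∈ V} → B),
        V.Nonempty → V.card ≤ k → 0 ≤ pV V f ∧ pV V f ≤ 1) ∧
    (∀ (c : Cons AA) (f : {x // x ∈ tsupp c} → B), 0 ≤ pC c f ∧ pC c f ≤ 1) ∧
    -- (SA1)
    (∀ V : Finset A, V.Nonempty → V.card ≤ k →
        ∑ f : {x // x ∈ V} → B, pV V f = 1) ∧
    -- (SA2)
    (∀ (U V : Finset A) (hUV : U ⊆ V), U.Nonempty → V.card ≤ k →
        ∀ f : {x // x ∈ U} → B,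
          pV U f = ∑ g : {x // x ∈ V} → B,
            if ∀ u : {x // x ∈ U}, g ⟨u.1, hUV u.2⟩ = f u then pV V g else 0) ∧
    -- (SA3)
    (∀ (c : Cons AA) (U : Finset A) (hU : U ⊆ tsupp c), U.Nonempty → U.card ≤ k →
        ∀ f : {x // x ∈ U} → B,
          pV U f = ∑ g : {x // x ∈ tsupp c} → B,
            if ∀ u : {x // x ∈ U}, g ⟨u.1, hU u.2⟩ = f u then pC c g else 0) ∧
    -- (SA4)
    (∀ (c : Cons AA) (f : {x // x ∈ tsupp c} → B),
        (fun i => f ⟨c.2.1 i, mem_tsupp c i⟩) ∉ BB.rel c.1 → pC c f = 0)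

/-- The relation symbols of the signature `σ*_k`. -/
inductive StarSym (σ : Type) (ar : σ → ℕ) (k : ℕ) : Type
  | TS (j : Fin k) (S : Finset (Fin (j.1 + 1)))
  | TI (j j' : Fin k) (iv : Fin (j'.1 + 1) → Fin (j.1 + 1))
  | RS (R : σ) (S : Finset (Fin (ar R)))
  | RI (R : σ) (j : Fin k) (iv : Fin (j.1 + 1) → Fin (ar R))

/-- Arities for `σ*_k`. -/
def starAr {k : ℕ} : StarSym σ ar k → ℕ
  | .TS _ _ => 1
  | .TI _ _ _ => 2
  | .RS _ _ => 1
  | .RI _ _ _ => 2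

/-- The universe of `AA*_k`: all tuples of length `1 ≤ j ≤ k` together with the constraints. -/
def StarUniv {A : Type} (AA : Struct σ ar A) (k : ℕ) : Type :=
  ((j : Fin k) × (Fin (j.1 + 1) → A)) ⊕ Cons AA

instance StarUniv.finite {A : Type} [Finite σ] [Finite A] {AA : Struct σ ar A} {k : ℕ} :
    Finite (StarUniv AA k) :=
  inferInstanceAs (Finite (((j : Fin k) × (Fin (j.1 + 1) → A)) ⊕ Cons AA))

noncomputable instance StarUniv.fintype {A : Type} [Fintype σ] [Fintype A]
    {AA : Struct σ ar A} {k : ℕ} : Fintype (StarUniv AA k) := Fintype.ofFinite _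

/-- The structure `AA*_k`. -/
def starStruct {A : Type} (AA : Struct σ ar A) (k : ℕ) :
    Struct (StarSym σ ar k) starAr (StarUniv AA k) where
  rel
    | .TS j S => {u | ∃ v : Fin (j.1 + 1) → A,
        (∀ i ∈ S, ∀ i' ∈ S, v i = v i') ∧ u = fun _ => Sum.inl ⟨j, v⟩}
    | .TI j j' iv => {u | ∃ v : Fin (j.1 + 1) → A,
        u = ![Sum.inl ⟨j, v⟩, Sum.inl ⟨j', v ∘ iv⟩]}
    | .RS R S => {u | ∃ (v : Fin (ar R) → A) (hv : v ∈ AA.rel R),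
        (∀ i ∈ S, ∀ i' ∈ S, v i = v i') ∧ u = fun _ => Sum.inr ⟨R, ⟨v, hv⟩⟩}
    | .RI R j iv => {u | ∃ (v : Fin (ar R) → A) (hv : v ∈ AA.rel R),
        u = ![Sum.inr ⟨R, ⟨v, hv⟩⟩, Sum.inl ⟨j, v ∘ iv⟩]}

/-- `AA ≡_k BB` : the structures `AA*_k` and `BB*_k` have a common equitable partition. -/
def EquivK {A B : Type} (k : ℕ) (AA : Struct σ ar A) (BB : Struct σ ar B) : Prop :=
  CommonEquitable (starStruct AA k) (starStruct BB k)

/-- A bundled σ-structure with finite universe. -/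
structure FinStruct (σ : Type) (ar : σ → ℕ) : Type 1 where
  carrier : Type
  [fin : Fintype carrier]
  str : Struct σ ar carrier

/-- One step in a chain: either a homomorphism exists, or the structures are
`≡_1`-equivalent (i.e. have a common equitable partition). -/
def FStep (X Y : FinStruct σ ar) : Prop :=
  (∃ h : X.carrier → Y.carrier, IsHom X.str Y.str h) ∨ CommonEquitable X.str Y.str

/-- The structure `AA` has treewidth `< k`: there is a tree-decomposition all of whose
bags have at most `k` elements. -/
def HasTreewidthLT {A : Type} (AA : Struct σ ar A) (k : ℕ) : Prop :=
  ∃ (V : Type) (G : SimpleGraph V) (β : V → Finset A),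
    G.IsTree ∧
    (∀ c : Cons AA, ∃ v : V, ∀ i, c.2.1 i ∈ β v) ∧
    (∀ (a : A) (u v : V), a ∈ β u → a ∈ β v →
      ∀ p : G.Walk u v, p.IsPath → ∀ w ∈ p.support, a ∈ β w) ∧
    (∀ v : V, (β v).card ≤ k)
/-- The adjacency matrix of a graph (a structure with one binary relation). -/
def adjMat {A : Type} (AA : Struct Unit (fun _ => 2) A) : Matrix A A ℝ :=
  fun a a' => if ![a, a'] ∈ AA.rel () then 1 else 0

/-- A matrix is decomposable if, up to partitioning rows and columns into two
(nontrivial) blocks, it is a direct sum. -/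
def MDecomposable {V W : Type} (M : Matrix V W ℝ) : Prop :=
  ∃ (SV : Set V) (SW : Set W),
    (SV.Nonempty ∨ SW.Nonempty) ∧ (SVᶜ.Nonempty ∨ SWᶜ.Nonempty) ∧
    ∀ v w, (v ∈ SV ∧ w ∉ SW) ∨ (v ∉ SV ∧ w ∈ SW) → M v w = 0

/-- A bundled rooted ftree. -/
structure RootedFtree (σ : Type) (ar : σ → ℕ) : Type 1 where
  carrier : Type
  [fin : Fintype carrier]
  str : Struct σ ar carrier
  isFtree : IsFtree str
  root : carrier

/-- The profile of an element: the number of homomorphisms from each rooted ftree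
mapping the root to it. -/
def degProfile {D : Type} (DD : Struct σ ar D) (d : D) : RootedFtree σ ar → ℕ :=
  fun F => rhomCount F.str F.root DD d

/-- The class of a constraint: its relation symbol, its equality pattern, and the
`degProfile`-classes of its coordinates. -/
def qProfile {D : Type} (DD : Struct σ ar D) (c : Cons DD) :
    Σ R : σ, Set (Fin (ar R) × Fin (ar R)) × (Fin (ar R) → (RootedFtree σ ar → ℕ)) :=
  ⟨c.1, ({p | c.2.1 p.1 = c.2.1 p.2}, fun s => degProfile DD (c.2.1 s))⟩

/-- Number of homomorphisms with a designated element and a designated constraint. -/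
def rhomCount2 {T D : Type} (TT : Struct σ ar T) (t : T) (c : Cons TT)
    (DD : Struct σ ar D) (d : D) (c' : Cons DD) : ℕ :=
  Nat.card {h : T → D // IsHom TT DD h ∧ h t = d ∧
    (⟨c.1, fun i => h (c.2.1 i)⟩ : Σ R : σ, Fin (ar R) → D) = ⟨c'.1, c'.2.1⟩}

/-- `(t, R(𝐭))` can be mapped to `(d, R'(𝐝))`. -/
def CanMap {T D : Type} {TT : Struct σ ar T} {DD : Struct σ ar D}
    (t : T) (c : Cons TT) (d : D) (c' : Cons DD) : Prop :=
  ∃ hR : c.1 = c'.1,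
    (∀ s s' : Fin (ar c.1), c.2.1 s = c.2.1 s' →
        c'.2.1 (Fin.cast (congrArg ar hR) s) = c'.2.1 (Fin.cast (congrArg ar hR) s')) ∧
    (∀ s : Fin (ar c.1), c.2.1 s = t → c'.2.1 (Fin.cast (congrArg ar hR) s) = d)

/-- A substructure of a structure: a subset of the universe together with a subset of
the tuples of each relation, lying inside the subset. -/
structure Substr {A : Type} (AA : Struct σ ar A) : Type where
  carrier : Set A
  srel : ∀ R : σ, Set (Fin (ar R) → A)
  srel_sub : ∀ R : σ, srel R ⊆ AA.rel R
  srel_mem : ∀ R : σ, ∀ u ∈ srel R, ∀ i, u i ∈ carrier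

/-- The substructure as a structure in its own right. -/
def Substr.toStruct {A : Type} {AA : Struct σ ar A} (Q : Substr AA) :
    Struct σ ar {x // x ∈ Q.carrier} where
  rel R := {u | (fun i => (u i).1) ∈ Q.srel R}

/-- Containment of substructures. -/
def Substr.le {A : Type} {AA : Struct σ ar A} (Q Q' : Substr AA) : Prop :=
  Q.carrier ⊆ Q'.carrier ∧ ∀ R : σ, Q.srel R ⊆ Q'.srel R

/-- A subftree of `TT` avoiding the constraint `c`, containing a unique element of the
tuple of `c`, which moreover participates in exactly one constraint of the subftree. -/
def GoodPiece {T : Type} (TT : Struct σ ar T) (c : Cons TT) (Q : Substr TT) : Prop :=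
  IsFtree Q.toStruct ∧
  c.2.1 ∉ Q.srel c.1 ∧
  ∃ x ∈ Q.carrier, (∃ i, c.2.1 i = x) ∧
    (∀ y ∈ Q.carrier, (∃ i, c.2.1 i = y) → y = x) ∧
    (∃! e : Σ R : σ, {u // u ∈ Q.srel R}, ∃ i, e.2.1 i = x)

/-- The collection `TT \ c` of maximal subftrees as above. -/
def TreeMinus {T : Type} (TT : Struct σ ar T) (c : Cons TT) : Set (Substr TT) :=
  {Q | GoodPiece TT c Q ∧ ∀ Q' : Substr TT, GoodPiece TT c Q' → Q.le Q' → Q'.le Q}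

/-- The disjoint union of two structures. -/
def dUnion {A B : Type} (AA : Struct σ ar A) (BB : Struct σ ar B) :
    Struct σ ar (A ⊕ B) where
  rel R := {u | (∃ v ∈ AA.rel R, u = fun i => Sum.inl (v i)) ∨
                (∃ v ∈ BB.rel R, u = fun i => Sum.inr (v i))}

/-- Embedding of constraints of `AA` into constraints of the disjoint union. -/
def consInl {A B : Type} (AA : Struct σ ar A) (BB : Struct σ ar B) (c : Cons AA) :
    Cons (dUnion AA BB) :=
  ⟨c.1, ⟨fun i => Sum.inl (c.2.1 i), Or.inl ⟨c.2.1, c.2.2, rfl⟩⟩⟩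

/-- Embedding of constraints of `BB` into constraints of the disjoint union. -/
def consInr {A B : Type} (AA : Struct σ ar A) (BB : Struct σ ar B) (c : Cons BB) :
    Cons (dUnion AA BB) :=
  ⟨c.1, ⟨fun i => Sum.inr (c.2.1 i), Or.inr ⟨c.2.1, c.2.2, rfl⟩⟩⟩

/-- The stable-degree class of an element of the disjoint union: its full iterated
degree sequence. -/
def degPclass {A B : Type} [Fintype σ] [Fintype A] [Fintype B]
    (AA : Struct σ ar A) (BB : Struct σ ar B) (x : A ⊕ B) :
    (k : ℕ) → DegT (Label σ ar) k :=
  fun k => iterDeg (dUnion AA BB) k (Sum.inl x)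

/-- The stable-degree class of a constraint of the disjoint union. -/
def degQclass {A B : Type} [Fintype σ] [Fintype A] [Fintype B]
    (AA : Struct σ ar A) (BB : Struct σ ar B) (c : Cons (dUnion AA BB)) :
    (k : ℕ) → DegT (Label σ ar) k :=
  fun k => iterDeg (dUnion AA BB) k (Sum.inr c)
/-- The set `Y`: tuples in `(B × [m])^m` with no repeated entries, in which the copy
index of each entry is bounded by the number of occurrences of its `B`-component. -/
def Ytype (B : Type) (m : ℕ) : Type :=
  {y : Fin m → B × Fin m // Function.Injective y ∧
    ∀ i, ((y i).2 : ℕ) + 1 ≤ Nat.card {j : Fin m // (y j).1 = (y i).1}}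

/-- Permuting the coordinates of an element of `Y`. -/
def permY {B : Type} {m : ℕ} (τ : Equiv.Perm (Fin m)) (y : Ytype B m) : Ytype B m :=
  ⟨fun i => y.1 (τ i), y.2.1.comp τ.injective, fun i => by
    have h := y.2.2 (τ i)
    have hc : Nat.card {j : Fin m // (y.1 (τ j)).1 = (y.1 (τ i)).1}
        = Nat.card {j : Fin m // (y.1 j).1 = (y.1 (τ i)).1} :=
      Nat.card_congr (τ.subtypeEquiv fun j => Iff.rfl)
    exact le_trans h (le_of_eq hc.symm)⟩

/-- The structure `X₁` from the proof of Theorem `thm:SA1`, built from a choice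
function `choice` selecting a canonical element of `Y` for each multiset. -/
def X1struct {A B : Type} (AA : Struct σ ar A) (BB : Struct σ ar B) (m : ℕ)
    (choice : (Fin m → B) → Ytype B m) : Struct σ ar (A × Ytype B m) where
  rel R := {u | ∃ a : Fin (ar R) → A, a ∈ AA.rel R ∧
    ∃ tt : Fin m → Fin (ar R) → B,
      (∀ i, tt i ∈ BB.rel R) ∧
      (∀ i s s', a s = a s' → tt i s = tt i s') ∧
      ∃ τ : Equiv.Perm (Fin m),
        u = fun s => (a s, permY τ (choice fun i => tt i s))}

/-!
Both conditions say that Duplicator wins the bijective `k`-pebble game on `𝐀` and `𝐁`. A common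
equitable partition of `𝐀*_k` and `𝐁*_k` makes equality of classes a winning strategy: the
projection constraints match the extensions of two tuples of the same class. A winning strategy
matches the homomorphisms from any structure of treewidth less than `k`, one element at a time,
since a tree decomposition always has an element all of whose bags lie inside a single bag.

Conversely, `k`-variable counting terms count homomorphisms from structures of treewidth less than
`k`. Values of terms are multiplicative, and distinct multiplicative maps are linearly independent,
so equality of the sums of all terms over the two universes lets the types of the extensions be
matched; thus equality of types is a winning strategy. It yields a partition of `𝐀*_k`, because
each of its constraints amounts to one tuple of `𝐀` of length at most `k`.
-/

/-! ### Rooted tree decompositions -/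

section TreeDecompositions

open SimpleGraph

section Graphs

variable {V W : Type*} {G : SimpleGraph V} {H : SimpleGraph W}

theorem exists_map_sumInl_eq {x y : V} :
    ∀ p : (G ⊕g H).Walk (.inl x) (.inl y), ∃ q : G.Walk x y, q.map Embedding.sumInl.toHom = p
  | .nil => ⟨.nil, rfl⟩
  | .cons (v := .inl _) h p => by
    obtain ⟨q, rfl⟩ := exists_map_sumInl_eq p
    exact ⟨.cons (by simpa using h) q, rfl⟩
  | .cons (v := .inr _) h _ => absurd h (not_adj_sum_inl_inr _ _)

theorem not_isCycle_sum_inl (hG : G.IsAcyclic) {x : V} (p : (G ⊕g H).Walk (.inl x) (.inl x)) :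
    ¬p.IsCycle := by
  obtain ⟨q, rfl⟩ := exists_map_sumInl_eq p
  exact fun h => hG q ((Walk.isCycle_map_iff_of_injective Sum.inl_injective).1 h)

theorem isAcyclic_sum (hG : G.IsAcyclic) (hH : H.IsAcyclic) : (G ⊕g H).IsAcyclic
  | .inl _, p => not_isCycle_sum_inl hG p
  | .inr _, p => fun h => not_isCycle_sum_inl hH (p.map Iso.sumComm.toHom)
      (h.map Iso.sumComm.injective)

theorem isTree_sum_sup_edge (hG : G.IsTree) (hH : H.IsTree) (r : V) (s : W) :
    ((G ⊕g H) ⊔ edge (.inl r) (.inr s)).IsTree :=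
  ⟨hG.connected.sum_sup_edge hH.connected,
    (isAcyclic_sum hG.isAcyclic hH.isAcyclic).sup_edge_of_not_reachable
      (not_reachable_sum_inl_inr _ _)⟩

theorem support_subset_of_isPath (hG : G.IsAcyclic) {u v : V} {p : G.Walk u v} (hp : p.IsPath)
    (q : G.Walk u v) : p.support ⊆ q.support := by
  have h : p = q.bypass :=
    congrArg Subtype.val ((hG.subsingleton_path u v).elim ⟨p, hp⟩ ⟨_, q.bypass_isPath⟩)
  exact h ▸ q.support_bypass_subset_support

end Graphs

variable {Y : Type} {k : ℕ} {C C₁ C₂ : Set (Σ R : σ, Fin (ar R) → Y)} {X X₁ X₂ : Finset Y}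
  {W W₁ W₂ : Set Y}

/-- The constraints in `C`, on the variables `Y`, have a tree decomposition with bags of size at
most `k` contained in `W`, one of which is `X`. As bags may be empty, an element's set of bags is
only asked to be preconnected. -/
def HasRootedTreeDecomp (k : ℕ) (C : Set (Σ R : σ, Fin (ar R) → Y)) (X : Finset Y)
    (W : Set Y) : Prop :=
  ∃ (V : Type) (G : SimpleGraph V) (β : V → Finset Y) (r : V),
    G.IsTree ∧ β r = X ∧ (∀ v, ↑(β v) ⊆ W) ∧ (∀ c ∈ C, ∃ v, ∀ i, c.2 i ∈ β v) ∧
    (∀ a, (G.induce {v | a ∈ β v}).Preconnected) ∧ ∀ v, (β v).card ≤ k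

namespace HasRootedTreeDecomp

theorem of_forall_mem (hXW : ↑X ⊆ W) (hX : X.card ≤ k) (hC : ∀ c ∈ C, ∀ i, c.2 i ∈ X) :
    HasRootedTreeDecomp k C X W :=
  ⟨Unit, ⊥, fun _ => X, (), .of_subsingleton, rfl, fun _ => hXW, fun c hc => ⟨(), hC c hc⟩,
    fun _ => .of_subsingleton, fun _ => hX⟩

theorem mono (h : HasRootedTreeDecomp k C₂ X W₁) (hC : C₁ ⊆ C₂) (hW : W₁ ⊆ W₂) :
    HasRootedTreeDecomp k C₁ X W₂ := by
  obtain ⟨V, G, β, r, hG, hr, hβ, hcover, hconn, hcard⟩ := h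
  exact ⟨V, G, β, r, hG, hr, fun v => (hβ v).trans hW, fun c hc => hcover c (hC hc), hconn, hcard⟩

theorem union (h₁ : HasRootedTreeDecomp k C₁ X₁ W₁) (h₂ : HasRootedTreeDecomp k C₂ X₂ W₂)
    (hW : W₁ ∩ W₂ ⊆ ↑(X₁ ∩ X₂)) : HasRootedTreeDecomp k (C₁ ∪ C₂) X₁ (W₁ ∪ W₂) := by
  obtain ⟨V₁, G₁, β₁, r₁, hG₁, rfl, hβ₁, hcover₁, hconn₁, hcard₁⟩ := h₁
  obtain ⟨V₂, G₂, β₂, r₂, hG₂, rfl, hβ₂, hcover₂, hconn₂, hcard₂⟩ := h₂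
  set K := (G₁ ⊕g G₂) ⊔ edge (.inl r₁) (.inr r₂)
  let f₁ : G₁ →g K := ⟨.inl, fun h => .inl (by simpa using h)⟩
  let f₂ : G₂ →g K := ⟨.inr, fun h => .inl (by simpa using h)⟩
  refine ⟨V₁ ⊕ V₂, K, Sum.elim β₁ β₂, .inl r₁, isTree_sum_sup_edge hG₁ hG₂ r₁ r₂, rfl,
    Sum.forall.2 ⟨fun v => (hβ₁ v).trans Set.subset_union_left,
      fun v => (hβ₂ v).trans Set.subset_union_right⟩, ?_, fun a => ?_,
    Sum.forall.2 ⟨hcard₁, hcard₂⟩⟩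
  · rintro c (hc | hc)
    · exact (hcover₁ c hc).imp' Sum.inl fun _ => id
    · exact (hcover₂ c hc).imp' Sum.inr fun _ => id
  · set S := {v | a ∈ Sum.elim β₁ β₂ v}
    have reach₁ {u v} (hu : .inl u ∈ S) (hv : .inl v ∈ S) :
        (K.induce S).Reachable ⟨_, hu⟩ ⟨_, hv⟩ :=
      (hconn₁ a ⟨u, hu⟩ ⟨v, hv⟩).map (induceHom (t := S) f₁ fun _ => id)
    have reach₂ {u v} (hu : .inr u ∈ S) (hv : .inr v ∈ S) :
        (K.induce S).Reachable ⟨_, hu⟩ ⟨_, hv⟩ :=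
      (hconn₂ a ⟨u, hu⟩ ⟨v, hv⟩).map (induceHom (t := S) f₂ fun _ => id)
    have reach {u v} (hu : .inl u ∈ S) (hv : .inr v ∈ S) :
        (K.induce S).Reachable ⟨_, hu⟩ ⟨_, hv⟩ := by
      have ha := Finset.mem_inter.1 (hW ⟨hβ₁ u hu, hβ₂ v hv⟩)
      have hadj : (K.induce S).Adj ⟨.inl r₁, ha.1⟩ ⟨.inr r₂, ha.2⟩ := .inr (by simp [edge_adj])
      exact (reach₁ hu ha.1).trans (hadj.reachable.trans (reach₂ ha.2 hv))
    rintro ⟨u | u, hu⟩ ⟨v | v, hv⟩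
    · exact reach₁ hu hv
    · exact reach hu hv
    · exact (reach hv hu).symm
    · exact reach₂ hu hv

theorem hasTreewidthLT {QQ : Struct σ ar Y} (h : HasRootedTreeDecomp k {c | c.2 ∈ QQ.rel c.1} X W) :
    HasTreewidthLT QQ k := by
  obtain ⟨V, G, β, r, hG, -, -, hcover, hconn, hcard⟩ := h
  refine ⟨V, G, β, hG, fun c => hcover ⟨c.1, c.2.1⟩ c.2.2, fun a u v hu hv p hp w hw => ?_, hcard⟩
  obtain ⟨q⟩ := hconn a ⟨u, hu⟩ ⟨v, hv⟩
  have hw' := support_subset_of_isPath hG.isAcyclic hp (q.map (Embedding.induce _).toHom) hw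
  obtain ⟨z, -, rfl⟩ := List.mem_map.1 (Walk.support_map _ q ▸ hw')
  exact z.2

end HasRootedTreeDecomp

end TreeDecompositions

/-! ### Terms -/

/-- Terms in the variables `Fin k` built from atoms, products and summation over one variable: the
counting queries of conjunctive `k`-variable formulas. -/
inductive CountTerm (σ : Type) (ar : σ → ℕ) (k : ℕ) : Type
  | one : CountTerm σ ar k
  | atom (R : σ) (i : Fin (ar R) → Fin k) : CountTerm σ ar k
  | mul (s t : CountTerm σ ar k) : CountTerm σ ar k
  | bind (i : Fin k) (t : CountTerm σ ar k) : CountTerm σ ar k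

theorem card_subtype_option_pi {N A : Type} [Finite N] [Fintype A] (P : A → (N → A) → Prop) :
    Nat.card {g : Option N → A // P (g none) (g ∘ some)} = ∑ x, Nat.card {g : N → A // P x g} := by
  rw [← Nat.card_sigma]
  exact Nat.card_congr (((Equiv.piOptionEquivProd (β := fun _ => A)).subtypeEquiv
    (q := fun p => P p.1 p.2) fun _ => Iff.rfl).trans (Equiv.subtypeProdEquivSigmaSubtype P))

theorem exists_forall_ne_apply_ne {k : ℕ} (f : Fin k → Fin k) (i : Fin k) :
    ∃ m, ∀ j ≠ i, f j ≠ m := by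
  have hcard : ((Finset.univ.erase i).image f).card < (Finset.univ : Finset (Fin k)).card :=
    Finset.card_image_le.trans_lt (Finset.card_erase_lt_of_mem (Finset.mem_univ i))
  obtain ⟨m, -, hm⟩ := Finset.exists_mem_notMem_of_card_lt_card hcard
  exact ⟨m, fun j hj hjm => hm (Finset.mem_image.2 ⟨j, by simpa using hj, hjm⟩)⟩

namespace CountTerm

variable {k : ℕ} {A Y Z : Type} [Fintype A] (AA : Struct σ ar A)

/-- The value of a term under an assignment of its free variables; `bind i` sums over the values of
the `i`-th variable. -/
def eval : CountTerm σ ar k → (Fin k → A) → ℕ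
  | .one, _ => 1
  | .atom R i, v => if v ∘ i ∈ AA.rel R then 1 else 0
  | .mul s t, v => s.eval v * t.eval v
  | .bind i t, v => ∑ x, t.eval (Function.update v i x)

theorem exists_eval_eq_eval_comp (t : CountTerm σ ar k) (f : Fin k → Fin k) :
    ∃ t' : CountTerm σ ar k, ∀ {A : Type} [Fintype A] (AA : Struct σ ar A) (v : Fin k → A),
      t'.eval AA v = t.eval AA (v ∘ f) := by
  induction t generalizing f with
  | one => exact ⟨.one, fun _ _ => rfl⟩
  | atom R i => exact ⟨.atom R (f ∘ i), fun _ _ => rfl⟩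
  | mul s t ihs iht =>
    obtain ⟨s', hs⟩ := ihs f
    obtain ⟨t', ht⟩ := iht f
    exact ⟨.mul s' t', fun AA v => by simp only [eval, hs, ht]⟩
  | bind i t ih =>
    -- A variable outside `f '' {i}ᶜ` can take over the role of the bound variable `i`.
    obtain ⟨m, hm⟩ := exists_forall_ne_apply_ne f i
    obtain ⟨t', ht⟩ := ih (Function.update f i m)
    refine ⟨.bind m t', fun AA v => Finset.sum_congr rfl fun x _ => ?_⟩
    rw [ht AA, Function.comp_update, Function.update_self]
    congr 1
    ext j
    by_cases hj : j = i
    · simp [hj]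
    · simp [hj, hm j hj]

/-- The index type of the bound variables of a term. -/
def Bound : CountTerm σ ar k → Type
  | .one => Empty
  | .atom _ _ => Empty
  | .mul s t => s.Bound ⊕ t.Bound
  | .bind _ t => Option t.Bound

instance finite_bound : ∀ t : CountTerm σ ar k, Finite t.Bound
  | .one => inferInstanceAs (Finite Empty)
  | .atom _ _ => inferInstanceAs (Finite Empty)
  | .mul s t => have := finite_bound s; have := finite_bound t
    inferInstanceAs (Finite (s.Bound ⊕ t.Bound))
  | .bind _ t => have := finite_bound t; inferInstanceAs (Finite (Option t.Bound))

/-- The constraints expressed by the atoms of a term, when `ρ` and `ι` name its free and its bound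
variables. -/
def constraints : (t : CountTerm σ ar k) → (ρ : Fin k → Y) → (ι : t.Bound → Y) →
    Set (Σ R : σ, Fin (ar R) → Y)
  | .one, _, _ => ∅
  | .atom R i, ρ, _ => {⟨R, ρ ∘ i⟩}
  | .mul s t, ρ, ι => s.constraints ρ (ι ∘ Sum.inl) ∪ t.constraints ρ (ι ∘ Sum.inr)
  | .bind i t, ρ, ι => t.constraints (Function.update ρ i (ι none)) (ι ∘ some)

theorem constraints_comp (t : CountTerm σ ar k) (h : Y → Z) (ρ : Fin k → Y) (ι : t.Bound → Y) :
    t.constraints (h ∘ ρ) (h ∘ ι) = (fun c => ⟨c.1, h ∘ c.2⟩) '' t.constraints ρ ι := by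
  induction t generalizing ρ with
  | one => exact (Set.image_empty _).symm
  | atom R i => simp [constraints, Function.comp_assoc]
  | mul s t ihs iht =>
    exact (congrArg₂ _ (ihs ρ (ι ∘ Sum.inl)) (iht ρ (ι ∘ Sum.inr))).trans
      (Set.image_union _ _ _).symm
  | bind i t ih =>
    rw [constraints, constraints, ← ih, Function.comp_update]
    rfl

theorem eval_eq_card (t : CountTerm σ ar k) (v : Fin k → A) :
    t.eval AA v = Nat.card {g : t.Bound → A // ∀ c ∈ t.constraints v g, c.2 ∈ AA.rel c.1} := by
  induction t generalizing v with
  | one =>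
    have : Nat.card {_g : Empty → A // ∀ c ∈ (∅ : Set (Σ R : σ, Fin (ar R) → A)),
      c.2 ∈ AA.rel c.1} = 1 := by simp
    exact this.symm
  | atom R i =>
    have : Nat.card {_g : Empty → A // ∀ c ∈ ({⟨R, v ∘ i⟩} : Set (Σ R : σ, Fin (ar R) → A)),
      c.2 ∈ AA.rel c.1} = if v ∘ i ∈ AA.rel R then 1 else 0 := by
      split_ifs with h <;> simp [h]
    exact this.symm
  | mul s t ihs iht =>
    rw [eval, ihs, iht, ← Nat.card_prod]
    refine Nat.card_congr (((Equiv.sumArrowEquivProdArrow _ _ _).subtypeEquiv fun g => ?_).trans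
      Equiv.subtypeProdEquivProd).symm
    exact Set.union_subset_iff (u := {c : Σ R : σ, Fin (ar R) → A | c.2 ∈ AA.rel c.1})
  | bind i t ih =>
    simp only [eval, ih]
    exact (card_subtype_option_pi fun x g =>
      ∀ c ∈ t.constraints (Function.update v i x) g, c.2 ∈ AA.rel c.1).symm

theorem hasRootedTreeDecomp (t : CountTerm σ ar k) {ρ : Fin k → Y} {ι : t.Bound → Y}
    (hι : Function.Injective ι) (hρι : ∀ i x, ρ i ≠ ι x) :
    HasRootedTreeDecomp k (t.constraints ρ ι) (Finset.univ.image ρ)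
      (Set.range ρ ∪ Set.range ι) := by
  have hcard (ρ : Fin k → Y) : (Finset.univ.image ρ).card ≤ k :=
    Finset.card_image_le.trans (by simp)
  induction t generalizing ρ with
  | one => exact .of_forall_mem (by simp) (hcard ρ) (by simp [constraints])
  | atom R i => exact .of_forall_mem (by simp) (hcard ρ) (by simp [constraints])
  | mul s t ihs iht =>
    have hs := ihs (hι.comp Sum.inl_injective) (fun i x => hρι i (.inl x))
    have ht := iht (hι.comp Sum.inr_injective) (fun i x => hρι i (.inr x))
    refine (hs.union ht ?_).mono subset_rfl ?_
    · rintro _ ⟨⟨i, rfl⟩ | ⟨x, rfl⟩, hy⟩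
      · simp
      · rcases hy with ⟨i, hi⟩ | ⟨y, hy⟩
        · exact absurd hi (hρι i (.inl x))
        · exact absurd (hι hy) Sum.inr_ne_inl
    · have hrange : Set.range ι = Set.range (ι ∘ Sum.inl) ∪ Set.range (ι ∘ Sum.inr) :=
        Sum.range_eq ι
      rw [Set.union_union_union_comm, Set.union_self, hrange]
  | bind i t ih =>
    have ht := ih (ρ := Function.update ρ i (ι none)) (ι := ι ∘ some)
      (hι.comp (Option.some_injective _)) fun j x => by
        by_cases hj : j = i
        · simpa [hj] using! hι.ne (Option.some_ne_none x).symm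
        · simpa [hj] using! hρι j (some x)
    have hroot : HasRootedTreeDecomp (σ := σ) (ar := ar) k ∅ (Finset.univ.image ρ) (Set.range ρ) :=
      .of_forall_mem (by simp) (hcard ρ) (by simp)
    refine (hroot.union ht ?_).mono Set.subset_union_right ?_
    · rintro _ ⟨⟨j, rfl⟩, ⟨j', hj'⟩ | ⟨x, hx⟩⟩
      · simpa using ⟨j', hj'⟩
      · exact absurd hx.symm (hρι j (some x))
    · rintro _ (hy | ⟨j, rfl⟩ | ⟨x, rfl⟩)
      · exact .inl hy
      · by_cases hj : j = i
        · exact .inr ⟨none, by simp [hj]⟩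
        · exact .inl ⟨j, by simp [hj]⟩
      · exact .inr ⟨some x, rfl⟩

/-- The structure on the bound variables of a term whose relations are the constraints of the term,
with all free variables identified to the extra point `none`. -/
def toStruct (t : CountTerm σ ar k) : Struct σ ar (Option t.Bound) where
  rel R := {u | ⟨R, u⟩ ∈ t.constraints (fun _ => none) some}

theorem hasTreewidthLT_toStruct (t : CountTerm σ ar k) : HasTreewidthLT t.toStruct k :=
  (t.hasRootedTreeDecomp (Option.some_injective _)
    fun _ x => (Option.some_ne_none x).symm).hasTreewidthLT

theorem homCount_toStruct (t : CountTerm σ ar k) :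
    homCount t.toStruct AA = ∑ x, t.eval AA fun _ => x := by
  simp only [eval_eq_card]
  rw [← card_subtype_option_pi fun x g => ∀ c ∈ t.constraints (fun _ => x) g, c.2 ∈ AA.rel c.1]
  refine Nat.card_congr (Equiv.subtypeEquivRight fun h => ?_)
  have himage := t.constraints_comp h (fun _ => none) some
  simp only [Function.comp_def] at himage ⊢
  rw [himage, Set.forall_mem_image]
  exact ⟨fun hh c hc => hh c.1 c.2 hc, fun hh R u hu => hh (x := ⟨R, u⟩) hu⟩

end CountTerm

/-! ### Matching points with equal invariants -/

section Bijections

variable {X Y I S : Type*}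

theorem exists_equiv_of_card_fiber_eq [Finite X] [Finite Y] {p : X → I} {q : Y → I}
    (h : ∀ i, Nat.card {x // p x = i} = Nat.card {y // q y = i}) : ∃ e : X ≃ Y, q ∘ e = p :=
  ⟨.ofFiberEquiv fun i => (Finite.card_eq.1 (h i)).some, funext (Equiv.ofFiberEquiv_map _)⟩

-- By Dedekind's theorem distinct characters are linearly independent, so the sums over `X` and
-- over `Y` contain each of them equally often.
theorem exists_equiv_of_sum_monoidHom_eq [Fintype X] [Fintype Y] {M : Type*} [Monoid M]
    {f : X → M →* ℕ} {g : Y → M →* ℕ} (h : ∀ m, ∑ x, f x m = ∑ y, g y m) :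
    ∃ e : X ≃ Y, g ∘ e = f := by
  let toRat (χ : M →* ℕ) : M →* ℚ := (Nat.castRingHom ℚ : ℕ →* ℚ).comp χ
  have toRat_injective : Function.Injective toRat := fun χ ψ hχψ =>
    MonoidHom.ext fun m => Nat.cast_injective (DFunLike.congr_fun hχψ m : (χ m : ℚ) = ψ m)
  have hcount : ∑ x, Finsupp.single (toRat (f x)) (1 : ℚ) = ∑ y, .single (toRat (g y)) 1 := by
    refine linearIndependent_monoidHom M ℚ ?_
    ext m
    simpa [toRat] using congrArg (Nat.cast : ℕ → ℚ) (h m)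
  refine exists_equiv_of_card_fiber_eq fun χ => ?_
  have hχ := DFunLike.congr_fun hcount (toRat χ)
  simpa [Finsupp.single_apply, toRat_injective.eq_iff, Fintype.card_subtype] using hχ

theorem exists_equiv_comp_eq [Finite S] {p : X → I} {q : Y → I} {e₀ : X ≃ Y} (he₀ : q ∘ e₀ = p)
    {v : S → X} {w : S → Y} (hpq : p ∘ v = q ∘ w) (hvw : ∀ s s', v s = v s' ↔ w s = w s') :
    ∃ e : X ≃ Y, q ∘ e = p ∧ e ∘ v = w := by
  have := Fintype.ofFinite S
  suffices h : ∀ D : Finset S, ∃ e : X ≃ Y, q ∘ e = p ∧ ∀ s ∈ D, e (v s) = w s by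
    obtain ⟨e, he, hew⟩ := h Finset.univ
    exact ⟨e, he, funext fun s => hew s (Finset.mem_univ s)⟩
  intro D
  induction D using Finset.induction_on with
  | empty => exact ⟨e₀, he₀, by simp⟩
  | insert s D _ ih =>
    obtain ⟨e, he, hD⟩ := ih
    have hs : q (e (v s)) = q (w s) := (congrFun he (v s)).trans (congrFun hpq s)
    refine ⟨e.trans (Equiv.swap (e (v s)) (w s)), ?_, ?_⟩
    · ext x
      exact (Equiv.apply_swap_eq_self hs (e x)).trans (congrFun he x)
    · intro r hr
      by_cases hrs : v r = v s
      · simp [hrs, (hvw r s).1 hrs]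
      · have hrD : r ∈ D := (Finset.mem_insert.1 hr).resolve_left fun h => hrs (h ▸ rfl)
        rw [Equiv.trans_apply, hD r hrD]
        refine Equiv.swap_apply_of_ne_of_ne ?_ fun h => hrs ((hvw r s).2 h)
        exact fun h => hrs (e.injective ((hD r hrD).trans h))

end Bijections

/-! ### Simplicial vertices of tree decompositions -/

section SimplicialVertices

open SimpleGraph

variable {V Q : Type*} {G : SimpleGraph V}

theorem eq_of_mem_support_of_dist_le {r t w : V} {p : G.Walk r t} (hp : p.length = G.dist r t)
    (hw : w ∈ p.support) (h : G.dist r t ≤ G.dist r w) : w = t := by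
  by_contra hne
  have := p.length_takeUntil_lt_length hw hne
  have := dist_le (p.takeUntil w hw)
  lia

theorem mem_support_of_minimalFor_dist (hG : G.IsTree) {S : Set V} {r t u : V}
    (hS : ∀ p : G.Walk t u, p.IsPath → ∀ w ∈ p.support, w ∈ S)
    (ht : MinimalFor (· ∈ S) (G.dist r) t) (q : G.Walk r u) : t ∈ q.support := by
  obtain ⟨p, hp, hlen⟩ := (hG.connected r t).exists_path_of_dist
  obtain ⟨p', hp'⟩ := (hG.connected t u).exists_isPath
  have hdisj : ∀ w ∈ p.support, w ∉ p'.support.tail := fun w hw hw' => by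
    have hwt : w = t := eq_of_mem_support_of_dist_le hlen hw <|
      not_lt.1 fun h => (ht.2 (hS p' hp' w (List.mem_of_mem_tail hw')) h.le).not_gt h
    have hnodup := hp'.support_nodup
    rw [← p'.cons_tail_support, List.nodup_cons] at hnodup
    exact hnodup.1 (hwt ▸ hw')
  have hpath : (p.append p').IsPath := by
    rw [Walk.isPath_def, Walk.support_append, List.nodup_append']
    exact ⟨hp.support_nodup, hp'.support_nodup.tail, fun w => hdisj w⟩
  exact support_subset_of_isPath hG.isAcyclic hpath q
    (Walk.support_subset_support_append_left _ _ p.end_mem_support)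

theorem exists_forall_mem_imp_subset [Finite Q] [Nonempty Q] (hG : G.IsTree) {β : V → Finset Q}
    (hβ : ∀ a u v, a ∈ β u → a ∈ β v → ∀ p : G.Walk u v, p.IsPath → ∀ w ∈ p.support, a ∈ β w) :
    ∃ a v₀, ∀ v, a ∈ β v → β v ⊆ β v₀ := by
  obtain ⟨r⟩ := hG.connected.nonempty
  by_cases hcover : ∀ a, ∃ v, a ∈ β v
  · choose top htop using fun a => exists_minimalFor_of_wellFoundedLT _ (G.dist r) (hcover a)
    obtain ⟨a, ha⟩ := Finite.exists_max fun a => G.dist r (top a)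
    refine ⟨a, top a, fun v hav b hbv => ?_⟩
    obtain ⟨p, hp⟩ := (hG.connected r (top b)).exists_walk_length_eq_dist
    obtain ⟨q, hq⟩ := (hG.connected (top b) v).exists_isPath
    have hmem := mem_support_of_minimalFor_dist (S := {v | a ∈ β v}) hG
      (hβ a _ v (htop a).1 hav) (htop a) (p.append q)
    rcases (p.mem_support_append_iff q).1 hmem with hmem | hmem
    · exact eq_of_mem_support_of_dist_le hp hmem (ha b) ▸ (htop b).1
    · exact hβ b _ _ (htop b).1 hbv q hq _ hmem
  · push Not at hcover
    obtain ⟨a, ha⟩ := hcover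
    exact ⟨a, r, fun v hv => absurd hv (ha v)⟩

end SimplicialVertices

/-! ### Back-and-forth systems -/

section CompFiber

variable {C M N : Type} {v : M → C} {g : M → N}

theorem comp_eq_iff_of_factorsThrough (hv : v.FactorsThrough g) {u : N → C} :
    u ∘ g = v ↔ u ∘ Subtype.val = v ∘ Set.rangeSplitting g := by
  constructor
  · rintro rfl
    exact funext fun x => (congrArg u (Set.apply_rangeSplitting g x)).symm
  · refine fun hu => funext fun i => (congrFun hu ⟨g i, i, rfl⟩).trans (hv ?_)
    exact Set.apply_rangeSplitting g _

/-- The solutions `u` of `u ∘ g = v`, parametrized by their values off the range of `g`. -/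
def compFiberEquiv (hv : v.FactorsThrough g) :
    {u : N → C // u ∘ g = v} ≃ ({n // n ∉ Set.range g} → C) :=
  (Equiv.subtypeEquivRight fun _ => comp_eq_iff_of_factorsThrough hv).trans
    (Equiv.subtypePreimage (· ∈ Set.range g) (v ∘ Set.rangeSplitting g))

theorem compFiberEquiv_symm_apply (hv : v.FactorsThrough g) (u : {n // n ∉ Set.range g} → C) :
    ((compFiberEquiv hv).symm u).1 =
      Sum.elim (v ∘ Set.rangeSplitting g) u ∘ (Equiv.sumCompl (· ∈ Set.range g)).symm := by
  ext n
  by_cases hn : ∃ i, g i = n <;> simp [compFiberEquiv, hn, Equiv.subtypePreimage]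

end CompFiber

/-- The relation `rel v w` between equally indexed tuples of `AA` and of `BB` is a winning
position of the bijective `k`-pebble game: the extensions of `v` and of `w` by one further point
can be matched as long as at most `k` points result. Indexing tuples by arbitrary types makes
passing to subtuples and reindexing the same operation. -/
structure IsBackAndForth {A B : Type} (k : ℕ) (AA : Struct σ ar A) (BB : Struct σ ar B)
    (rel : ∀ {N : Type}, (N → A) → (N → B) → Prop) : Prop where
  of_isEmpty : ∀ {N : Type} [IsEmpty N] (v : N → A) (w : N → B), rel v w
  comp : ∀ {M N : Type} {v : N → A} {w : N → B}, rel v w → ∀ g : M → N, rel (v ∘ g) (w ∘ g)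
  extend : ∀ {N : Type} [Finite N] {v : N → A} {w : N → B}, Nat.card N < k → rel v w →
    ∃ φ : A ≃ B, ∀ x, rel (Option.elim' x v) (Option.elim' (φ x) w)
  rel_iff : ∀ {R : σ} {u : Fin (ar R) → A} {w : Fin (ar R) → B}, rel u w →
    (u ∈ AA.rel R ↔ w ∈ BB.rel R)

namespace IsBackAndForth

variable {A B : Type} {k : ℕ} {AA : Struct σ ar A} {BB : Struct σ ar B}
  {rel : ∀ {N : Type}, (N → A) → (N → B) → Prop}

theorem exists_equiv_sumElim (h : IsBackAndForth k AA BB rel) {P : Type} [Finite P]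
    {v : P → A} {w : P → B} (hvw : rel v w) (M : Type) [Finite M]
    (hcard : Nat.card P + Nat.card M ≤ k) :
    ∃ Φ : (M → A) ≃ (M → B), ∀ u, rel (Sum.elim v u) (Sum.elim w (Φ u)) := by
  induction M using Finite.induction_empty_option with
  | of_equiv e ih =>
    obtain ⟨Φ, hΦ⟩ := ih (by rwa [Nat.card_congr e])
    refine ⟨(e.symm.arrowCongr (.refl A)).trans (Φ.trans (e.arrowCongr (.refl B))), fun u => ?_⟩
    convert h.comp (hΦ (u ∘ e)) (Sum.map id e.symm) using 1 <;> ext (_ | _) <;> simp; rfl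
  | h_empty =>
    refine ⟨.ofUnique _ _, fun u => ?_⟩
    convert h.comp hvw (Sum.elim id PEmpty.elim) using 1 <;> ext (_ | ⟨⟨⟩⟩) <;> rfl
  | @h_option M _ ih =>
    rw [Finite.card_option] at hcard
    obtain ⟨Φ, hΦ⟩ := ih (by lia)
    choose φ hφ using fun u => h.extend (by rw [Nat.card_sum]; lia) (hΦ u)
    let split (C : Type) : (Option M → C) ≃ (M → C) × C :=
      Equiv.piOptionEquivProd.trans (Equiv.prodComm _ _)
    refine ⟨(split A).trans ((Φ.prodShear φ).trans (split B).symm), fun u => ?_⟩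
    convert h.comp (hφ (u ∘ some) (u none)) (Sum.elim (some ∘ .inl) (Option.map .inr)) using 1 <;>
      ext (_ | _ | _) <;> rfl

theorem exists_equiv_comp_eq (h : IsBackAndForth k AA BB rel) {M N : Type} [Finite N]
    (hcard : Nat.card N ≤ k) {v : M → A} {w : M → B} (hvw : rel v w)
    (hker : ∀ i j, v i = v j ↔ w i = w j) (g : M → N) :
    ∃ Φ : {u : N → A // u ∘ g = v} ≃ {u : N → B // u ∘ g = w}, ∀ u, rel u.1 (Φ u).1 := by
  by_cases hv : v.FactorsThrough g
  · have hw : w.FactorsThrough g := fun i j hij => (hker i j).1 (hv hij)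
    obtain ⟨Φ, hΦ⟩ := h.exists_equiv_sumElim (h.comp hvw (Set.rangeSplitting g))
      {n // n ∉ Set.range g} <| by
        rwa [← Nat.card_sum, Nat.card_congr (Equiv.sumCompl (· ∈ Set.range g))]
    refine ⟨(compFiberEquiv hv).trans (Φ.trans (compFiberEquiv hw).symm), fun u => ?_⟩
    obtain ⟨u, rfl⟩ := (compFiberEquiv hv).symm.surjective u
    simpa [compFiberEquiv_symm_apply] using
      h.comp (hΦ u) (Equiv.sumCompl (· ∈ Set.range g)).symm
  · have hA : IsEmpty {u : N → A // u ∘ g = v} := ⟨fun u => hv fun i j hij => by simp [← u.2, hij]⟩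
    have hB : IsEmpty {u : N → B // u ∘ g = w} := ⟨fun u => hv fun i j hij => (hker i j).2 <| by
      simp [← u.2, hij]⟩
    exact ⟨.equivOfIsEmpty _ _, isEmptyElim⟩

theorem exists_equiv_restrict_funSplitAt (h : IsBackAndForth k AA BB rel) (hk : 0 < k) {V : Type*}
    {Q : Type} {β : V → Finset Q} {a : Q} {v₀ : V} (hv₀ : ∀ v, a ∈ β v → β v ⊆ β v₀)
    (hcard : (β v₀).card ≤ k) {u : {x // x ≠ a} → A} {w : {x // x ≠ a} → B}
    (huw : rel (((β v₀).subtype (· ≠ a)).restrict u) (((β v₀).subtype (· ≠ a)).restrict w)) :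
    ∃ φ : A ≃ B, ∀ x v, a ∈ β v → rel ((β v).restrict ((Equiv.funSplitAt a A).symm (x, u)))
      ((β v).restrict ((Equiv.funSplitAt a B).symm (φ x, w))) := by
  by_cases ha : a ∈ β v₀
  · have hlt : Nat.card ((β v₀).subtype (· ≠ a)) < k := by
      rw [Nat.card_eq_fintype_card, Fintype.card_coe, Finset.card_subtype]
      exact (Finset.card_lt_card (Finset.filter_ssubset.2 ⟨a, ha, by simp⟩)).trans_le hcard
    obtain ⟨φ, hφ⟩ := h.extend hlt huw
    refine ⟨φ, fun x v hv => ?_⟩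
    let g (b : β v) : Option ((β v₀).subtype (· ≠ a)) :=
      if hb : b.1 = a then none else some ⟨⟨b, hb⟩, Finset.mem_subtype.2 (hv₀ v hv b.2)⟩
    convert h.comp (hφ x) g using 1 <;> ext b <;> by_cases hb : b.1 = a <;>
      simp [g, hb, Equiv.funSplitAt]
  · obtain ⟨φ, -⟩ := h.extend (N := Empty) (by simpa) (h.of_isEmpty Empty.elim Empty.elim)
    exact ⟨φ, fun x v hv => absurd (hv₀ v hv hv) ha⟩

theorem exists_equiv_restrict (h : IsBackAndForth k AA BB rel) (hk : 0 < k) {V : Type*}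
    {G : SimpleGraph V} (hG : G.IsTree) {Q : Type} [Finite Q] {β : V → Finset Q}
    (hβ : ∀ a u v, a ∈ β u → a ∈ β v → ∀ p : G.Walk u v, p.IsPath → ∀ w ∈ p.support, a ∈ β w)
    (hcard : ∀ v, (β v).card ≤ k) :
    ∃ Φ : (Q → A) ≃ (Q → B), ∀ u v, rel ((β v).restrict u) ((β v).restrict (Φ u)) := by
  induction hn : Nat.card Q generalizing Q with
  | zero =>
    have := Finite.card_eq_zero_iff.1 hn
    exact ⟨.ofUnique _ _, fun u v => h.of_isEmpty _ _⟩
  | succ n ih =>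
    have : Nonempty Q := Finite.card_pos_iff.1 (by lia)
    obtain ⟨a, v₀, hv₀⟩ := exists_forall_mem_imp_subset hG hβ
    have hn' : Nat.card {x // x ≠ a} = n := by
      have := Fintype.ofFinite Q
      simp_all
    obtain ⟨Φ, hΦ⟩ := ih (β := fun v => (β v).subtype (· ≠ a))
      (by simpa using fun b _ => hβ b)
      (fun v => (Finset.card_subtype _ _).trans_le ((Finset.card_filter_le _ _).trans (hcard v)))
      hn'
    choose φ hφ using fun u => h.exists_equiv_restrict_funSplitAt hk hv₀ (hcard v₀) (hΦ u v₀)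
    let split (C : Type) : (Q → C) ≃ ({x // x ≠ a} → C) × C :=
      (Equiv.funSplitAt a C).trans (Equiv.prodComm _ _)
    refine ⟨(split A).trans ((Φ.prodShear φ).trans (split B).symm), fun u v => ?_⟩
    obtain ⟨⟨u, x⟩, rfl⟩ := (split A).symm.surjective u
    by_cases hv : a ∈ β v
    · simpa [split] using hφ u x v hv
    · have hne (b : β v) : b.1 ≠ a := fun hb => hv (hb ▸ b.2)
      let g (b : β v) : (β v).subtype (· ≠ a) := ⟨⟨b, hne b⟩, Finset.mem_subtype.2 b.2⟩
      convert h.comp (hΦ u v) g using 1 <;> ext b <;> simp [g, split, Equiv.funSplitAt, hne]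

theorem homCount_eq (h : IsBackAndForth k AA BB rel) (hk : 0 < k) {Q : Type} [Finite Q]
    {QQ : Struct σ ar Q} (hQ : HasTreewidthLT QQ k) : homCount QQ AA = homCount QQ BB := by
  obtain ⟨V, G, β, hG, hcover, hβ, hcard⟩ := hQ
  obtain ⟨Φ, hΦ⟩ := h.exists_equiv_restrict hk hG hβ hcard
  refine Nat.card_congr (Φ.subtypeEquiv fun u => forall₃_congr fun R q hq => ?_)
  obtain ⟨v, hv⟩ := hcover ⟨R, q, hq⟩
  exact h.rel_iff (h.comp (hΦ u v) fun i => ⟨q i, hv i⟩)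

end IsBackAndForth

/-! ### Common equitable partitions -/

section Fibers

variable {X Y I L : Type*} {p : X → I} {q : Y → I}

theorem card_subtype_eq_and (P : X → Prop) (i : I) :
    Nat.card {x // p x = i ∧ P x} = Nat.card {x : {x // P x} // p x = i} := by
  simp only [and_comm (b := P _)]
  exact Nat.card_congr (Equiv.subtypeSubtypeEquivSubtypeInter P (p · = i)).symm

theorem forall_card_eq_iff_exists_equiv [Finite X] [Finite Y] {P : X → Prop} {Q : Y → Prop} :
    (∀ i, Nat.card {x // p x = i ∧ P x} = Nat.card {y // q y = i ∧ Q y}) ↔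
      ∃ e : {x // P x} ≃ {y // Q y}, ∀ x, q (e x).1 = p x.1 := by
  simp only [card_subtype_eq_and]
  constructor
  · intro h
    obtain ⟨e, he⟩ := exists_equiv_of_card_fiber_eq h
    exact ⟨e, congrFun he⟩
  · rintro ⟨e, he⟩ i
    exact Nat.card_congr (e.subtypeEquiv fun x => by rw [he])

theorem exists_comp_eq_of_equiv [Nonempty L] {e : X ≃ Y} (he : q ∘ e = p) {F : X → L} {G : Y → L}
    (h : ∀ x y, p x = q y → F x = G y) : ∃ c : I → L, c ∘ p = F ∧ c ∘ q = G := by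
  subst he
  have hG : G.FactorsThrough q := fun y y' hy =>
    (h (e.symm y) y (by simp)).symm.trans (h (e.symm y) y' (by simpa))
  obtain ⟨c, rfl⟩ := (Function.factorsThrough_iff G).1 hG
  exact ⟨c, funext fun x => (h x (e x) rfl).symm, rfl⟩

end Fibers

/-- The maps `pA`, `qA` and `pB`, `qB` give a common equitable partition of `AA` and `BB`. The
equalities of class sizes and of parameters are witnessed by bijections. -/
structure IsCommonEquitable {A B I J : Type} (AA : Struct σ ar A) (BB : Struct σ ar B)
    (pA : A → I) (qA : Cons AA → J) (pB : B → I) (qB : Cons BB → J) : Prop where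
  elem : ∃ e : A ≃ B, pB ∘ e = pA
  cons : ∃ e : Cons AA ≃ Cons BB, qB ∘ e = qA
  cons_of_elem : ∀ a b, pA a = pB b → ∀ ℓ,
    ∃ e : {c // lab AA a c = ℓ} ≃ {c // lab BB b c = ℓ}, ∀ c, qB (e c).1 = qA c.1
  elem_of_cons : ∀ c d, qA c = qB d → ∀ ℓ,
    ∃ e : {a // lab AA a c = ℓ} ≃ {b // lab BB b d = ℓ}, ∀ a, pB (e a).1 = pA a.1

theorem commonEquitable_iff [Finite σ] {A B : Type} [Finite A] [Finite B] {AA : Struct σ ar A}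
    {BB : Struct σ ar B} : CommonEquitable AA BB ↔
      ∃ (I J : Type) (pA : A → I) (qA : Cons AA → J) (pB : B → I) (qB : Cons BB → J),
        IsCommonEquitable AA BB pA qA pB qB := by
  constructor
  · rintro ⟨I, J, pA, qA, pB, qB, cpar, dpar, hA, hB, hp, hq⟩
    exact ⟨I, J, pA, qA, pB, qB, exists_equiv_of_card_fiber_eq hp,
      exists_equiv_of_card_fiber_eq hq,
      fun a b hab ℓ => forall_card_eq_iff_exists_equiv.1 fun j => by rw [hA.1, hB.1, hab],
      fun c d hcd ℓ => forall_card_eq_iff_exists_equiv.1 fun i => by rw [hA.2, hB.2, hcd]⟩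
  · rintro ⟨I, J, pA, qA, pB, qB, ⟨e, he⟩, ⟨f, hf⟩, hcons, helem⟩
    obtain ⟨cpar, hcA, hcB⟩ := exists_comp_eq_of_equiv he
      (F := fun a ℓ j => Nat.card {c // qA c = j ∧ lab AA a c = ℓ})
      (G := fun b ℓ j => Nat.card {c // qB c = j ∧ lab BB b c = ℓ}) fun a b hab =>
        funext₂ fun ℓ => forall_card_eq_iff_exists_equiv.2 (hcons a b hab ℓ)
    obtain ⟨dpar, hdA, hdB⟩ := exists_comp_eq_of_equiv hf
      (F := fun c ℓ i => Nat.card {a // pA a = i ∧ lab AA a c = ℓ})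
      (G := fun d ℓ i => Nat.card {b // pB b = i ∧ lab BB b d = ℓ}) fun c d hcd =>
        funext₂ fun ℓ => forall_card_eq_iff_exists_equiv.2 (helem c d hcd ℓ)
    refine ⟨I, J, pA, qA, pB, qB, fun ℓ i => cpar i ℓ, fun ℓ j => dpar j ℓ,
      ⟨fun a ℓ j => ?_, fun c ℓ i => ?_⟩, ⟨fun a ℓ j => ?_, fun c ℓ i => ?_⟩,
      fun i => Nat.card_congr (e.subtypeEquiv fun a => by rw [← he, Function.comp_apply]),
      fun j => Nat.card_congr (f.subtypeEquiv fun c => by rw [← hf, Function.comp_apply])⟩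
    · exact (congrFun₂ (congrFun hcA a) ℓ j).symm
    · exact (congrFun₂ (congrFun hdA c) ℓ i).symm
    · exact (congrFun₂ (congrFun hcB a) ℓ j).symm
    · exact (congrFun₂ (congrFun hdB c) ℓ i).symm

theorem lab_eq_mk_iff {A : Type} {AA : Struct σ ar A} {R : σ}
    {u : {u : Fin (ar R) → A // u ∈ AA.rel R}} {a : A} {S : Finset (Fin (ar R))} :
    lab AA a ⟨R, u⟩ = ⟨R, S⟩ ↔ ∀ s, u.1 s = a ↔ s ∈ S := by
  simp [lab, Finset.ext_iff]

theorem lab_eq_lab_iff {A B : Type} {AA : Struct σ ar A} {BB : Struct σ ar B} {R : σ}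
    {u : {u : Fin (ar R) → A // u ∈ AA.rel R}} {w : {w : Fin (ar R) → B // w ∈ BB.rel R}}
    {a : A} {b : B} : lab AA a ⟨R, u⟩ = lab BB b ⟨R, w⟩ ↔ ∀ s, u.1 s = a ↔ w.1 s = b := by
  simp [lab, Finset.ext_iff]

namespace IsCommonEquitable

variable {A B I J : Type} {AA : Struct σ ar A} {BB : Struct σ ar B}
  {pA : A → I} {qA : Cons AA → J} {pB : B → I} {qB : Cons BB → J}

theorem symm (h : IsCommonEquitable AA BB pA qA pB qB) :
    IsCommonEquitable BB AA pB qB pA qA where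
  elem := by
    obtain ⟨e, rfl⟩ := h.elem
    exact ⟨e.symm, funext fun b => by simp⟩
  cons := by
    obtain ⟨e, rfl⟩ := h.cons
    exact ⟨e.symm, funext fun c => by simp⟩
  cons_of_elem b a hba ℓ := by
    obtain ⟨e, he⟩ := h.cons_of_elem a b hba.symm ℓ
    exact ⟨e.symm, fun c => by simp [← he]⟩
  elem_of_cons d c hdc ℓ := by
    obtain ⟨e, he⟩ := h.elem_of_cons c d hdc.symm ℓ
    exact ⟨e.symm, fun b => by simp [← he]⟩

theorem elem_eq_of_cons_eq (h : IsCommonEquitable AA BB pA qA pB qB) {R : σ}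
    {u : {u : Fin (ar R) → A // u ∈ AA.rel R}} {w : {w : Fin (ar R) → B // w ∈ BB.rel R}}
    (huw : qA ⟨R, u⟩ = qB ⟨R, w⟩) (s : Fin (ar R)) : pA (u.1 s) = pB (w.1 s) := by
  obtain ⟨e, he⟩ := h.elem_of_cons _ _ huw (lab AA (u.1 s) ⟨R, u⟩)
  have hs : w.1 s = (e ⟨u.1 s, rfl⟩).1 := (lab_eq_lab_iff.1 (e ⟨u.1 s, rfl⟩).2.symm s).1 rfl
  rw [hs, he]

theorem exists_mem_rel_of_elem_eq (h : IsCommonEquitable AA BB pA qA pB qB) {R : σ}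
    {u : Fin (ar R) → A} (hu : u ∈ AA.rel R) {s : Fin (ar R)} {b : B} (hb : pA (u s) = pB b) :
    ∃ w ∈ BB.rel R, w s = b ∧ ∀ t, pA (u t) = pB (w t) := by
  obtain ⟨e, he⟩ := h.cons_of_elem _ _ hb (lab AA (u s) ⟨R, u, hu⟩)
  have hq := he ⟨⟨R, u, hu⟩, rfl⟩
  generalize e ⟨⟨R, u, hu⟩, rfl⟩ = c at hq
  obtain ⟨⟨R', w⟩, hw⟩ := c
  obtain rfl : R' = R := congrArg Sigma.fst hw
  exact ⟨w.1, w.2, (lab_eq_lab_iff.1 hw.symm s).1 rfl, h.elem_eq_of_cons_eq hq.symm⟩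

end IsCommonEquitable

theorem exists_equiv_of_mem_range_iff {A B X Y : Type*} {f : A → X} {g : B → Y}
    (hf : f.Injective) (hg : g.Injective) (e : X ≃ Y)
    (h : ∀ x, x ∈ Set.range f ↔ e x ∈ Set.range g) : ∃ φ : A ≃ B, ∀ a, e (f a) = g (φ a) :=
  ⟨(Equiv.ofInjective f hf).trans ((e.subtypeEquiv h).trans (Equiv.ofInjective g hg).symm),
    fun a => (Equiv.apply_ofInjective_symm hg ⟨e (f a), (h _).1 ⟨a, rfl⟩⟩).symm⟩

/-! ### From common equitable partitions of `starStruct` to back-and-forth systems -/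

namespace StarUniv

variable {A B : Type} {k : ℕ}

/-- A tuple of length at most `k`, as a point of `starStruct AA k`. -/
abbrev ofTuple (AA : Struct σ ar A) (j : Fin k) (v : Fin (j.1 + 1) → A) : StarUniv AA k :=
  Sum.inl ⟨j, v⟩

theorem ofTuple_injective (AA : Struct σ ar A) (j : Fin k) : (ofTuple AA j).Injective :=
  Sum.inl_injective.comp sigma_mk_injective

/-- A constraint, as a point of `starStruct AA k`. -/
abbrev ofCons {AA : Struct σ ar A} (c : Cons AA) : StarUniv AA k := Sum.inr c

/-- The constraint of `starStruct AA k` which relates a tuple `v` to its projection `v ∘ i`. -/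
def proj (AA : Struct σ ar A) {j j' : Fin k} (i : Fin (j'.1 + 1) → Fin (j.1 + 1))
    (v : Fin (j.1 + 1) → A) : Cons (starStruct AA k) :=
  ⟨.TI j j' i, ![ofTuple AA j v, ofTuple AA j' (v ∘ i)], v, rfl⟩

theorem proj_injective (AA : Struct σ ar A) {j j' : Fin k} (i : Fin (j'.1 + 1) → Fin (j.1 + 1)) :
    (proj AA i).Injective := fun v w hvw => by
  have htuple := congrArg Subtype.val (eq_of_heq (Sigma.mk.inj hvw).2)
  exact ofTuple_injective AA j (congrFun htuple (0 : Fin 2))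

theorem lab_proj_eq_iff {AA : Struct σ ar A} {j j' : Fin k} (hj : j ≠ j')
    {i : Fin (j'.1 + 1) → Fin (j.1 + 1)} {v : Fin (j'.1 + 1) → A} {c : Cons (starStruct AA k)} :
    lab _ (ofTuple AA j' v) c = ⟨.TI j j' i, {(1 : Fin 2)}⟩ ↔ ∃ u, u ∘ i = v ∧ proj AA i u = c := by
  constructor
  · obtain ⟨R, u, hu⟩ := c
    intro hc
    obtain rfl : R = .TI j j' i := congrArg Sigma.fst hc
    obtain ⟨u, rfl⟩ := hu
    have hv := (lab_eq_mk_iff.1 hc (1 : Fin 2)).2 (Finset.mem_singleton_self _)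
    exact ⟨u, ofTuple_injective AA j' hv, rfl⟩
  · rintro ⟨u, rfl, rfl⟩
    refine lab_eq_mk_iff.2 (Fin.forall_fin_two.2 ⟨?_, ?_⟩)
    · exact iff_of_false (fun h => hj (Sigma.mk.inj (Sum.inl_injective h)).1)
        (Finset.mem_singleton.not.2 (Fin.zero_ne_one (n := 0)))
    · exact iff_of_true rfl (Finset.mem_singleton_self _)

/-- The tuples with projection `v` correspond to the constraints which relate a longer or shorter
tuple to `v`. -/
def projFiberEquiv (AA : Struct σ ar A) {j j' : Fin k} (hj : j ≠ j')
    (i : Fin (j'.1 + 1) → Fin (j.1 + 1)) (v : Fin (j'.1 + 1) → A) :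
    {u // u ∘ i = v} ≃
      {c // lab (starStruct AA k) (ofTuple AA j' v) c = ⟨.TI j j' i, {(1 : Fin 2)}⟩} :=
  .ofBijective (fun u => ⟨proj AA i u.1, (lab_proj_eq_iff hj).2 ⟨u, u.2, rfl⟩⟩)
    ⟨fun u u' h => Subtype.ext (proj_injective AA i (congrArg Subtype.val h)), fun c => by
      obtain ⟨u, hu, hc⟩ := (lab_proj_eq_iff hj).1 c.2
      exact ⟨⟨u, hu⟩, Subtype.ext hc⟩⟩

/-- The relation between equally indexed tuples which says that their corresponding subtuples have
the same classes `pA` and `pB`. -/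
def SameClasses {I : Type} {AA : Struct σ ar A} {BB : Struct σ ar B} (pA : StarUniv AA k → I)
    (pB : StarUniv BB k → I) {N : Type} (v : N → A) (w : N → B) : Prop :=
  ∀ (j : Fin k) (i : Fin (j.1 + 1) → N), pA (ofTuple AA j (v ∘ i)) = pB (ofTuple BB j (w ∘ i))

theorem SameClasses.comp {I : Type} {AA : Struct σ ar A} {BB : Struct σ ar B}
    {pA : StarUniv AA k → I} {pB : StarUniv BB k → I} {M N : Type} {v : N → A} {w : N → B}
    (h : SameClasses pA pB v w) (g : M → N) : SameClasses pA pB (v ∘ g) (w ∘ g) :=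
  fun j i => h j (g ∘ i)

end StarUniv

open StarUniv

namespace IsCommonEquitable

variable {A B I J : Type} {k : ℕ} {AA : Struct σ ar A} {BB : Struct σ ar B}
  {pA : StarUniv AA k → I} {qA : Cons (starStruct AA k) → J}
  {pB : StarUniv BB k → I} {qB : Cons (starStruct BB k) → J}

theorem exists_eq_ofTuple (h : IsCommonEquitable (starStruct AA k) (starStruct BB k) pA qA pB qB)
    {j : Fin k} {v : Fin (j.1 + 1) → A} {y : StarUniv BB k} (hy : pA (ofTuple AA j v) = pB y) :
    ∃ w, y = ofTuple BB j w ∧ SameClasses pA pB v w := by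
  have htrans (j' : Fin k) (i : Fin (j'.1 + 1) → Fin (j.1 + 1)) : ∃ w,
      y = ofTuple BB j w ∧ pA (ofTuple AA j' (v ∘ i)) = pB (ofTuple BB j' (w ∘ i)) := by
    obtain ⟨_, ⟨w, rfl⟩, rfl, hw⟩ :=
      h.exists_mem_rel_of_elem_eq (R := .TI j j' i) (s := (0 : Fin 2)) ⟨v, rfl⟩ hy
    exact ⟨w, rfl, hw (1 : Fin 2)⟩
  obtain ⟨w, rfl, -⟩ := htrans j id
  refine ⟨w, rfl, fun j' i => ?_⟩
  obtain ⟨w', hw', h'⟩ := htrans j' i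
  rwa [ofTuple_injective BB j hw']

theorem sameClasses_of_ofTuple
    (h : IsCommonEquitable (starStruct AA k) (starStruct BB k) pA qA pB qB) {j : Fin k}
    {v : Fin (j.1 + 1) → A} {w : Fin (j.1 + 1) → B}
    (hvw : pA (ofTuple AA j v) = pB (ofTuple BB j w)) : SameClasses pA pB v w := by
  obtain ⟨w', hw', hvw'⟩ := h.exists_eq_ofTuple hvw
  rwa [ofTuple_injective BB j hw']

theorem exists_equiv_sameClasses_const
    (h : IsCommonEquitable (starStruct AA k) (starStruct BB k) pA qA pB qB) (hk : 0 < k) :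
    ∃ φ : A ≃ B, ∀ x, SameClasses pA pB (fun _ : Fin 1 => x) (fun _ => φ x) := by
  let j : Fin k := ⟨0, hk⟩
  have hconst (C : Type) : Function.Injective (fun (x : C) (_ : Fin (j.1 + 1)) => x) :=
    fun _ _ hx => congrFun hx 0
  have heq_const {C : Type} (u : Fin 1 → C) : (fun _ => u 0) = u :=
    funext fun i => congrArg u (Subsingleton.elim _ _)
  obtain ⟨e, he⟩ := h.elem
  have hpe (x : StarUniv AA k) : pA x = pB (e x) := (congrFun he x).symm
  obtain ⟨φ, hφ⟩ := exists_equiv_of_mem_range_iff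
    ((ofTuple_injective AA j).comp (hconst A)) ((ofTuple_injective BB j).comp (hconst B)) e
    fun x => by
      constructor
      · rintro ⟨a, rfl⟩
        obtain ⟨w, hw, -⟩ := h.exists_eq_ofTuple (hpe (ofTuple AA j fun _ => a))
        exact ⟨w 0, hw ▸ congrArg (ofTuple BB j) (heq_const w)⟩
      · rintro ⟨b, hb⟩
        obtain ⟨v, rfl, -⟩ := h.symm.exists_eq_ofTuple (y := x)
          ((congrArg pB hb).trans (hpe x).symm)
        exact ⟨v 0, congrArg (ofTuple AA j) (heq_const v)⟩
  exact ⟨φ, fun x => h.sameClasses_of_ofTuple ((hpe _).trans (congrArg pB (hφ x)))⟩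

theorem exists_equiv_comp_eq_sameClasses
    (h : IsCommonEquitable (starStruct AA k) (starStruct BB k) pA qA pB qB) {j j' : Fin k}
    (hj : j ≠ j') (i : Fin (j'.1 + 1) → Fin (j.1 + 1)) {v : Fin (j'.1 + 1) → A}
    {w : Fin (j'.1 + 1) → B} (hvw : pA (ofTuple AA j' v) = pB (ofTuple BB j' w)) :
    ∃ Φ : {u // u ∘ i = v} ≃ {u // u ∘ i = w}, ∀ u, SameClasses pA pB u.1 (Φ u).1 := by
  obtain ⟨e, he⟩ := h.cons_of_elem _ _ hvw ⟨.TI j j' i, {(1 : Fin 2)}⟩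
  refine ⟨(projFiberEquiv AA hj i v).trans (e.trans (projFiberEquiv BB hj i w).symm), fun u => ?_⟩
  have hproj := congrArg Subtype.val <|
    (projFiberEquiv BB hj i w).apply_symm_apply (e (projFiberEquiv AA hj i v u))
  have hq := (he (projFiberEquiv AA hj i v u)).symm
  rw [← hproj] at hq
  exact h.sameClasses_of_ofTuple (h.elem_eq_of_cons_eq hq (0 : Fin 2))

/-- A tuple with prescribed tail is determined by its first entry. -/
def tailFiberEquiv {n : ℕ} {C : Type} (v : Fin n → C) :
    C ≃ {u : Fin (n + 1) → C // u ∘ Fin.succ = v} where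
  toFun x := ⟨Fin.cons x v, rfl⟩
  invFun u := u.1 0
  left_inv _ := rfl
  right_inv := by
    rintro ⟨u, rfl⟩
    exact Subtype.ext (Fin.cons_self_tail u)

theorem exists_equiv_sameClasses_cons
    (h : IsCommonEquitable (starStruct AA k) (starStruct BB k) pA qA pB qB) {j : ℕ} (hj : j + 1 < k)
    {v : Fin (j + 1) → A} {w : Fin (j + 1) → B} (hvw : SameClasses pA pB v w) :
    ∃ φ : A ≃ B, ∀ x, SameClasses pA pB (Fin.cons x v : Fin (j + 2) → A) (Fin.cons (φ x) w) := by
  obtain ⟨Φ, hΦ⟩ := h.exists_equiv_comp_eq_sameClasses (j := ⟨j + 1, hj⟩) (j' := ⟨j, by lia⟩)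
    (by simp) Fin.succ (hvw _ id)
  refine ⟨(tailFiberEquiv v).trans (Φ.trans (tailFiberEquiv w).symm), fun x => ?_⟩
  have hx := hΦ (tailFiberEquiv v x)
  rwa [← (tailFiberEquiv w).apply_symm_apply (Φ (tailFiberEquiv v x))] at hx

theorem mem_rel_of_sameClasses
    (h : IsCommonEquitable (starStruct AA k) (starStruct BB k) pA qA pB qB) {R : σ} (hR : ar R ≤ k)
    {u : Fin (ar R) → A} {w : Fin (ar R) → B} (huw : SameClasses pA pB u w) (hu : u ∈ AA.rel R) :
    w ∈ BB.rel R := by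
  obtain hR₀ | ⟨j, hj⟩ : ar R = 0 ∨ ∃ j, ar R = j + 1 := by cases ar R <;> simp
  · obtain ⟨e, he⟩ := h.elem
    obtain ⟨_, ⟨w', hw', -, rfl⟩, -⟩ := h.exists_mem_rel_of_elem_eq
      (R := .RS R ∅) (s := (0 : Fin 1)) ⟨u, hu, by simp, rfl⟩ (congrFun he (ofCons ⟨R, u, hu⟩)).symm
    have : IsEmpty (Fin (ar R)) := hR₀ ▸ Fin.isEmpty
    rwa [Subsingleton.elim w w']
  · let i : Fin (j + 1) ≃ Fin (ar R) := finCongr hj.symm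
    obtain ⟨_, ⟨w', hw', rfl⟩, hw, -⟩ := h.exists_mem_rel_of_elem_eq
      (R := .RI R ⟨j, by lia⟩ i) (s := (1 : Fin 2)) ⟨u, hu, rfl⟩ (huw ⟨j, by lia⟩ i)
    rwa [← i.surjective.injective_comp_right (ofTuple_injective BB _ hw)]

theorem isBackAndForth (h : IsCommonEquitable (starStruct AA k) (starStruct BB k) pA qA pB qB)
    (har : ∀ R, ar R ≤ k) : IsBackAndForth k AA BB (SameClasses pA pB) where
  of_isEmpty v w j i := isEmptyElim (i 0)
  comp := SameClasses.comp
  extend {N _ v w} hcard hvw := by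
    obtain hN | ⟨j, hj⟩ : Nat.card N = 0 ∨ ∃ j, Nat.card N = j + 1 := by cases Nat.card N <;> simp
    · obtain ⟨φ, hφ⟩ := h.exists_equiv_sameClasses_const (by lia)
      refine ⟨φ, fun x => ?_⟩
      have := Finite.card_eq_zero_iff.1 hN
      convert (hφ x).comp (fun _ : Option N => 0) using 1 <;> ext (_ | i) <;>
        first | rfl | exact isEmptyElim i
    · obtain ⟨ε⟩ : Nonempty (N ≃ Fin (j + 1)) := ⟨Finite.equivFinOfCardEq hj⟩
      obtain ⟨φ, hφ⟩ := h.exists_equiv_sameClasses_cons (v := v ∘ ε.symm) (w := w ∘ ε.symm)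
        (by lia) (hvw.comp ε.symm)
      refine ⟨φ, fun x => ?_⟩
      convert (hφ x).comp (Option.elim' 0 (Fin.succ ∘ ε)) using 1 <;> ext (_ | i) <;> simp
  rel_iff {R u w} huw :=
    ⟨h.mem_rel_of_sameClasses (har R) huw,
      h.symm.mem_rel_of_sameClasses (har R) fun j i => (huw j i).symm⟩

end IsCommonEquitable

/-! ### From homomorphism counts to back-and-forth systems -/

namespace CountTerm

theorem eval_foldr_mul {A : Type} [Fintype A] {k : ℕ} (AA : Struct σ ar A) (v : Fin k → A)
    (m : FreeMonoid (CountTerm σ ar k)) :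
    (m.toList.foldr mul one).eval AA v = FreeMonoid.lift (fun t => t.eval AA v) m := by
  induction m using FreeMonoid.inductionOn' with
  | one => rfl
  | of_mul t m ih => simp [eval, ih]

end CountTerm

/-- The type of a tuple: its equality pattern together with the values of all terms at its
subtuples. -/
def tupleType {A : Type} [Fintype A] (k : ℕ) (AA : Struct σ ar A) {N : Type} (v : N → A) :
    Setoid N × ((Fin k → N) → CountTerm σ ar k → ℕ) :=
  (Setoid.ker v, fun f t => t.eval AA (v ∘ f))

section TupleType

variable {A B : Type} [Fintype A] [Fintype B] {k : ℕ} {AA : Struct σ ar A} {BB : Struct σ ar B}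
  {N : Type} {v : N → A} {w : N → B}

theorem tupleType_eq_iff : tupleType k AA v = tupleType k BB w ↔
    (∀ i j, v i = v j ↔ w i = w j) ∧
      ∀ (f : Fin k → N) (t : CountTerm σ ar k), t.eval AA (v ∘ f) = t.eval BB (w ∘ f) := by
  simp only [tupleType, Prod.mk.injEq, Setoid.ext_iff, Setoid.ker_def, funext_iff]

theorem tupleType_comp (h : tupleType k AA v = tupleType k BB w) {M : Type} (g : M → N) :
    tupleType k AA (v ∘ g) = tupleType k BB (w ∘ g) := by
  rw [tupleType_eq_iff] at h ⊢
  exact ⟨fun i j => h.1 (g i) (g j), fun f => h.2 (g ∘ f)⟩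

theorem tupleType_eq_of_surjective {ε : Fin k → N} (hε : ε.Surjective)
    (hker : ∀ i j, v i = v j ↔ w i = w j)
    (h : ∀ t : CountTerm σ ar k, t.eval AA (v ∘ ε) = t.eval BB (w ∘ ε)) :
    tupleType k AA v = tupleType k BB w := by
  refine tupleType_eq_iff.2 ⟨hker, fun f t => ?_⟩
  obtain ⟨t', ht'⟩ := t.exists_eval_eq_eval_comp (Function.surjInv hε ∘ f)
  have hf : ε ∘ Function.surjInv hε ∘ f = f := funext fun i => Function.surjInv_eq hε (f i)
  have hcomp {C : Type} (u : N → C) : u ∘ f = (u ∘ ε) ∘ Function.surjInv hε ∘ f :=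
    congrArg (u ∘ ·) hf.symm
  rw [hcomp v, hcomp w, ← ht', ← ht', h]

theorem exists_surjective_option [Finite N] [Nonempty N] (hN : Nat.card N < k) :
    ∃ (ε : Fin k → Option N) (i : Fin k) (g : Fin k → N), ε.Surjective ∧
      ∀ {C : Type} (u : N → C) (x : C), Option.elim' x u ∘ ε = Function.update (u ∘ g) i x := by
  have := Fintype.ofFinite N
  obtain ⟨ι⟩ : Nonempty (Option N ↪ Fin k) :=
    Function.Embedding.nonempty_of_card_le (by simpa using hN)
  obtain ⟨n₀⟩ := ‹Nonempty N›
  let ε : Fin k → Option N := Function.extend ι id fun _ => some n₀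
  have hει (o : Option N) : ε (ι o) = o := ι.injective.extend_apply id _ o
  refine ⟨ε, ι none, fun j => (ε j).getD n₀, fun o => ⟨ι o, hει o⟩, fun u x => funext fun j => ?_⟩
  by_cases hj : ∃ o, ι o = j
  · obtain ⟨_ | n, rfl⟩ := hj <;> simp [hει]
  · have hne : j ≠ ι none := fun h => hj ⟨none, h.symm⟩
    simp [ε, hne, Function.extend_apply' _ _ _ hj]

theorem exists_equiv_tupleType_eq_of_sum_eq [Finite N] {ε : Fin k → Option N} (hε : ε.Surjective)
    (hvw : tupleType k AA v = tupleType k BB w)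
    (hsum : ∀ t : CountTerm σ ar k,
      ∑ x, t.eval AA (Option.elim' x v ∘ ε) = ∑ y, t.eval BB (Option.elim' y w ∘ ε)) :
    ∃ φ : A ≃ B, ∀ x,
      tupleType k AA (Option.elim' x v) = tupleType k BB (Option.elim' (φ x) w) := by
  rw [tupleType_eq_iff] at hvw
  let f (x : A) (t : CountTerm σ ar k) : ℕ := t.eval AA (Option.elim' x v ∘ ε)
  let g (y : B) (t : CountTerm σ ar k) : ℕ := t.eval BB (Option.elim' y w ∘ ε)
  obtain ⟨φ₀, hφ₀⟩ : ∃ φ₀ : A ≃ B, g ∘ φ₀ = f := by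
    obtain ⟨φ₀, hφ₀⟩ := exists_equiv_of_sum_monoidHom_eq
      (f := fun x => FreeMonoid.lift (f x)) (g := fun y => FreeMonoid.lift (g y)) fun m => by
        simpa only [f, g, CountTerm.eval_foldr_mul]
          using hsum (m.toList.foldr CountTerm.mul CountTerm.one)
    exact ⟨φ₀, funext fun x => FreeMonoid.lift.injective (congrFun hφ₀ x)⟩
  have hpoints : f ∘ v = g ∘ w := by
    ext n t
    have helim {C : Type} (u : N → C) :
        Option.elim' (u n) u ∘ ε = u ∘ Option.elim' n id ∘ ε := by
      ext j
      cases h : ε j <;> simp [h]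
    simp only [f, g, Function.comp_apply, helim]
    exact hvw.2 _ t
  obtain ⟨φ, hφ, hφvw⟩ := exists_equiv_comp_eq hφ₀ hpoints hvw.1
  refine ⟨φ, fun x => tupleType_eq_of_surjective hε ?_ fun t => (congrFun₂ hφ x t).symm⟩
  subst hφvw
  rintro (_ | i) (_ | j) <;> simp [φ.injective.eq_iff]

end TupleType

section HomCount

variable {A B : Type} [Fintype A] [Fintype B] {k : ℕ} {AA : Struct σ ar A} {BB : Struct σ ar B}

/-- The structure with empty universe whose only constraints are those with symbol `R`. -/
def emptyStruct (R : σ) : Struct σ ar Empty where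
  rel R' := {_u | R' = R}

theorem hasTreewidthLT_emptyStruct (k : ℕ) (R : σ) :
    HasTreewidthLT (emptyStruct (ar := ar) R) k :=
  (HasRootedTreeDecomp.of_forall_mem (X := ∅) (W := ∅) (by simp) (by simp)
    fun c _ i => (c.2 i).elim).hasTreewidthLT

theorem homCount_emptyStruct {A : Type} (AA : Struct σ ar A) {R : σ} (hR : ar R = 0)
    (u : Fin (ar R) → A) : homCount (emptyStruct R) AA = if u ∈ AA.rel R then 1 else 0 := by
  have : IsEmpty (Fin (ar R)) := hR ▸ Fin.isEmpty
  have hhom (h : Empty → A) : IsHom (emptyStruct R) AA h ↔ u ∈ AA.rel R := by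
    constructor
    · exact fun hh => Subsingleton.elim (h ∘ isEmptyElim) u ▸ hh R isEmptyElim rfl
    · rintro hu _ w rfl
      rwa [Subsingleton.elim (fun i => h (w i)) u]
  simp only [homCount, hhom]
  split_ifs with hu <;> simp [hu]

theorem exists_equiv_tupleType_eq
    (h : ∀ t : CountTerm σ ar k, homCount t.toStruct AA = homCount t.toStruct BB)
    {N : Type} [Finite N] {v : N → A} {w : N → B} (hN : Nat.card N < k)
    (hvw : tupleType k AA v = tupleType k BB w) :
    ∃ φ : A ≃ B, ∀ x,
      tupleType k AA (Option.elim' x v) = tupleType k BB (Option.elim' (φ x) w) := by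
  obtain hN' | hN' := isEmpty_or_nonempty N
  · have helim {C : Type} (u : N → C) (x : C) :
        Option.elim' x u ∘ (fun _ : Fin k => none) = fun _ => x := rfl
    refine exists_equiv_tupleType_eq_of_sum_eq (ε := fun _ => none) ?_ hvw fun t => ?_
    · exact Option.forall.2 ⟨⟨⟨0, by lia⟩, rfl⟩, isEmptyElim⟩
    · simpa only [helim, CountTerm.homCount_toStruct] using h t
  · obtain ⟨ε, i, g, hε, hupdate⟩ := exists_surjective_option hN
    refine exists_equiv_tupleType_eq_of_sum_eq hε hvw fun t => ?_
    simpa only [hupdate, CountTerm.eval] using (tupleType_eq_iff.1 hvw).2 g (.bind i t)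

theorem mem_rel_iff_of_tupleType_eq {R : σ} (hR : 0 < ar R) (hRk : ar R ≤ k)
    {u : Fin (ar R) → A} {w : Fin (ar R) → B} (huw : tupleType k AA u = tupleType k BB w) :
    u ∈ AA.rel R ↔ w ∈ BB.rel R := by
  have : Nonempty (Fin (ar R)) := ⟨⟨0, hR⟩⟩
  let f : Fin k → Fin (ar R) := Function.invFun (Fin.castLE hRk)
  have hf : f ∘ Fin.castLE hRk = id := Function.invFun_comp (Fin.castLE_injective hRk)
  have hatom := (tupleType_eq_iff.1 huw).2 f (.atom R (Fin.castLE hRk))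
  simp only [CountTerm.eval, Function.comp_assoc, hf, Function.comp_id] at hatom
  split_ifs at hatom <;> simp_all

theorem isBackAndForth_tupleType (hk : 0 < k) (har : ∀ R, ar R ≤ k)
    (h : ∀ (Q : Type) (_ : Fintype Q) (QQ : Struct σ ar Q),
      HasTreewidthLT QQ k → homCount QQ AA = homCount QQ BB) :
    IsBackAndForth k AA BB fun v w => tupleType k AA v = tupleType k BB w where
  of_isEmpty v w := tupleType_eq_iff.2
    ⟨isEmptyElim, fun f => isEmptyElim (f ⟨0, hk⟩)⟩
  comp huw g := tupleType_comp huw g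
  extend := exists_equiv_tupleType_eq fun t => h _ (Fintype.ofFinite _) _ t.hasTreewidthLT_toStruct
  rel_iff {R u w} huw := by
    obtain hR | hR := (ar R).eq_zero_or_pos
    · have := h _ inferInstance _ (hasTreewidthLT_emptyStruct k R)
      rw [homCount_emptyStruct AA hR u, homCount_emptyStruct BB hR w] at this
      split_ifs at this <;> simp_all
    · exact mem_rel_iff_of_tupleType_eq hR (har R) huw

end HomCount

/-! ### A criterion for common equitable partitions -/

section Fibers

variable {X Y I L : Type*} {p : X → I} {q : Y → I}

theorem sum_card_fiber_and [Finite X] [Fintype L] (p : X → I) (F : X → L) (i : I) :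
    ∑ l, Nat.card {x // p x = i ∧ F x = l} = Nat.card {x // p x = i} := by
  rw [← Nat.card_sigma]
  exact Nat.card_congr <| (Equiv.sigmaCongrRight fun l =>
    (Equiv.subtypeSubtypeEquivSubtypeInter _ (F · = l)).symm).trans
      (Equiv.sigmaFiberEquiv fun x : {x // p x = i} => F x)

theorem exists_equiv_of_card_eq_of_ne [Finite X] [Finite Y] [Finite L] {F : X → L} {G : Y → L}
    {e₀ : X ≃ Y} (he₀ : q ∘ e₀ = p) (l₀ : L) (h : ∀ l ≠ l₀, ∀ i,
      Nat.card {x // p x = i ∧ F x = l} = Nat.card {y // q y = i ∧ G y = l}) :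
    ∃ e : X ≃ Y, q ∘ e = p ∧ G ∘ e = F := by
  have := Fintype.ofFinite L
  have h₀ (i : I) : Nat.card {x // p x = i ∧ F x = l₀} = Nat.card {y // q y = i ∧ G y = l₀} := by
    have hi : Nat.card {x // p x = i} = Nat.card {y // q y = i} :=
      Nat.card_congr (e₀.subtypeEquiv fun x => by rw [← he₀, Function.comp_apply])
    rw [← sum_card_fiber_and p F, ← sum_card_fiber_and q G,
      ← Finset.add_sum_erase _ _ (Finset.mem_univ l₀),
      ← Finset.add_sum_erase _ _ (Finset.mem_univ l₀),
      Finset.sum_congr rfl fun l hl => h l (Finset.ne_of_mem_erase hl) i] at hi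
    exact Nat.add_right_cancel hi
  obtain ⟨e, he⟩ := exists_equiv_of_card_fiber_eq (p := fun x => (p x, F x))
      (q := fun y => (q y, G y)) fun ⟨i, l⟩ => by
    simp only [Prod.mk.injEq]
    by_cases hl : l = l₀
    · exact hl ▸ h₀ i
    · exact h l hl i
  exact ⟨e, funext fun x => congrArg Prod.fst (congrFun he x),
    funext fun x => congrArg Prod.snd (congrFun he x)⟩

end Fibers

/-- The class of a tuple with respect to a classification `p` of its entries: its equality pattern
together with the classes of its entries. -/
def tupleClass {N A I : Type} (p : A → I) (u : N → A) : Setoid N × (N → I) :=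
  (Setoid.ker u, p ∘ u)

theorem tupleClass_eq_iff {N A B I : Type} {p : A → I} {q : B → I} {u : N → A} {w : N → B} :
    tupleClass p u = tupleClass q w ↔
      (∀ s t, u s = u t ↔ w s = w t) ∧ ∀ s, p (u s) = q (w s) := by
  simp only [tupleClass, Prod.mk.injEq, Setoid.ext_iff, Setoid.ker_def, funext_iff,
    Function.comp_apply]

section Criterion

variable {A B I : Type} [Finite A] [Finite B] {AA : Struct σ ar A} {BB : Struct σ ar B}
  {pA : A → I} {pB : B → I}

theorem exists_equiv_rel_tupleClass_eq {e : A ≃ B} (he : pB ∘ e = pA) {R : σ} (s : Fin (ar R))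
    (h : ∀ a b, pA a = pB b → ∃ e : {u : {u // u ∈ AA.rel R} // u.1 s = a} ≃
      {w : {w // w ∈ BB.rel R} // w.1 s = b}, ∀ u, tupleClass pB (e u).1.1 = tupleClass pA u.1.1) :
    ∃ e : {u // u ∈ AA.rel R} ≃ {w // w ∈ BB.rel R},
      (fun w => tupleClass pB w.1) ∘ e = fun u => tupleClass pA u.1 := by
  have := Fintype.ofFinite A
  have := Fintype.ofFinite B
  refine exists_equiv_of_card_fiber_eq fun i => ?_
  rw [← sum_card_fiber_and _ (fun u => u.1 s), ← sum_card_fiber_and _ (fun w => w.1 s),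
    ← e.sum_comp]
  exact Finset.sum_congr rfl fun a _ =>
    forall_card_eq_iff_exists_equiv.2 (h a (e a) (congrFun he a).symm) i

theorem exists_equiv_rel_tupleClass_eq_of_elem {R : σ}
    {e₀ : {u // u ∈ AA.rel R} ≃ {w // w ∈ BB.rel R}}
    (he₀ : (fun w => tupleClass pB w.1) ∘ e₀ = fun u => tupleClass pA u.1) {a : A} {b : B}
    (h : ∀ s, ∃ e : {u : {u // u ∈ AA.rel R} // u.1 s = a} ≃
      {w : {w // w ∈ BB.rel R} // w.1 s = b}, ∀ u, tupleClass pB (e u).1.1 = tupleClass pA u.1.1) :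
    ∃ e : {u // u ∈ AA.rel R} ≃ {w // w ∈ BB.rel R},
      (∀ u, tupleClass pB (e u).1 = tupleClass pA u.1) ∧
        ∀ u s, (e u).1 s = b ↔ u.1 s = a := by
  -- The tuples avoiding `a` and `b`, about which `h` says nothing, are what remains.
  obtain ⟨e, he, hpos⟩ := exists_equiv_of_card_eq_of_ne he₀
      (F := fun u => Finset.univ.filter (u.1 · = a))
      (G := fun w => Finset.univ.filter (w.1 · = b)) ∅ fun l hl => by
    obtain ⟨s, hs⟩ := Finset.nonempty_iff_ne_empty.2 hl
    obtain ⟨e, he⟩ := h s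
    have hP (u : {u // u ∈ AA.rel R}) (hu : Finset.univ.filter (u.1 · = a) = l) : u.1 s = a :=
      by simpa [← hu] using hs
    have hQ (w : {w // w ∈ BB.rel R}) (hw : Finset.univ.filter (w.1 · = b) = l) : w.1 s = b :=
      by simpa [← hw] using hs
    refine forall_card_eq_iff_exists_equiv.2 ⟨(Equiv.subtypeSubtypeEquivSubtype (hP _)).symm.trans
      ((e.subtypeEquiv fun u => ?_).trans (Equiv.subtypeSubtypeEquivSubtype (hQ _))),
      fun u => he ⟨u.1, hP u.1 u.2⟩⟩
    have hker := (tupleClass_eq_iff.1 (he u)).1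
    simp only [← u.2, ← (e u).2, hker]
  exact ⟨e, congrFun he, fun u s => by simpa using Finset.ext_iff.1 (congrFun hpos u) s⟩

theorem isCommonEquitable_of_exists_equiv (har : ∀ R, 0 < ar R) {e : A ≃ B} (he : pB ∘ e = pA)
    (h : ∀ R s a b, pA a = pB b → ∃ e : {u : {u // u ∈ AA.rel R} // u.1 s = a} ≃
      {w : {w // w ∈ BB.rel R} // w.1 s = b}, ∀ u, tupleClass pB (e u).1.1 = tupleClass pA u.1.1) :
    IsCommonEquitable (J := Σ R, Setoid (Fin (ar R)) × (Fin (ar R) → I)) AA BB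
      pA (fun c => ⟨c.1, tupleClass pA c.2.1⟩) pB (fun c => ⟨c.1, tupleClass pB c.2.1⟩) where
  elem := ⟨e, he⟩
  cons := by
    choose E hE using fun R => exists_equiv_rel_tupleClass_eq he ⟨0, har R⟩ (h R _)
    exact ⟨.sigmaCongrRight E, funext fun c => congrArg (Sigma.mk c.1) (congrFun (hE c.1) c.2)⟩
  cons_of_elem a b hab ℓ := by
    choose E₀ hE₀ using fun R => exists_equiv_rel_tupleClass_eq he ⟨0, har R⟩ (h R _)
    choose E hE hpos using fun R =>
      exists_equiv_rel_tupleClass_eq_of_elem (hE₀ R) fun s => h R s a b hab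
    have hlab (c : Cons AA) : lab BB b ⟨c.1, E c.1 c.2⟩ = lab AA a c :=
      lab_eq_lab_iff.2 (hpos c.1 c.2)
    exact ⟨(Equiv.sigmaCongrRight E).subtypeEquiv fun c => hlab c ▸ Iff.rfl,
      fun c => congrArg (Sigma.mk c.1.1) (hE c.1.1 c.1.2)⟩
  elem_of_cons := by
    rintro ⟨R, u⟩ ⟨R', w⟩ huw ℓ
    obtain rfl : R = R' := congrArg Sigma.fst huw
    obtain ⟨hker, hp⟩ := tupleClass_eq_iff.1 (eq_of_heq (Sigma.mk.inj huw).2)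
    obtain ⟨e', he', hvw⟩ := exists_equiv_comp_eq he (funext hp) hker
    refine ⟨e'.subtypeEquiv fun a => ?_, fun a => congrFun he' a⟩
    have : lab BB (e' a) ⟨R, w⟩ = lab AA a ⟨R, u⟩ := lab_eq_lab_iff.2 fun s => by
      rw [← hvw, Function.comp_apply, e'.injective.eq_iff]
    rw [this]

end Criterion

/-! ### From back-and-forth systems to common equitable partitions of `starStruct` -/

/-- The length of the tuples of a given sort: a number below `k` stands for the tuples whose length
is its successor, a symbol of `σ` for the tuples of its arity. -/
abbrev sortLen (ar : σ → ℕ) {k : ℕ} : Fin k ⊕ σ → ℕ := Sum.elim (fun j => j.1 + 1) ar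

theorem sortLen_le {k : ℕ} (har : ∀ R, ar R ≤ k) (s : Fin k ⊕ σ) : sortLen ar s ≤ k :=
  Sum.rec (fun j => j.2) har s

/-- The expansion of `AA` by the full relations of all arities up to `k`. Its constraints are the
points of `starStruct AA k`. -/
def withTuples {A : Type} (AA : Struct σ ar A) (k : ℕ) :
    Struct (Fin k ⊕ σ) (sortLen ar) A where
  rel
    | .inl _ => Set.univ
    | .inr R => AA.rel R

/-- The points of `starStruct AA k` as the constraints of `withTuples AA k`. -/
def StarUniv.equivSigma {A : Type} {AA : Struct σ ar A} {k : ℕ} :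
    StarUniv AA k ≃ Σ s, {u // u ∈ (withTuples AA k).rel s} where
  toFun
    | .inl ⟨j, v⟩ => ⟨.inl j, v, trivial⟩
    | .inr ⟨R, u⟩ => ⟨.inr R, u⟩
  invFun
    | ⟨.inl j, v⟩ => .inl ⟨j, v.1⟩
    | ⟨.inr R, u⟩ => .inr ⟨R, u⟩
  left_inv := by rintro (_ | _) <;> rfl
  right_inv := by rintro ⟨_ | _, _⟩ <;> rfl

theorem IsBackAndForth.withTuples {A B : Type} {k : ℕ} {AA : Struct σ ar A} {BB : Struct σ ar B}
    {rel : ∀ {N : Type}, (N → A) → (N → B) → Prop} (h : IsBackAndForth k AA BB rel) :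
    IsBackAndForth k (withTuples AA k) (withTuples BB k) rel where
  of_isEmpty := h.of_isEmpty
  comp := h.comp
  extend := h.extend
  rel_iff {R _ _} huw := by
    cases R with
    | inl j => exact Iff.rfl
    | inr R => exact h.rel_iff huw

/-! Every constraint of `starStruct AA k` consists of a source tuple, some of whose entries are
required to agree, and of subtuples of the source. -/

namespace StarSym

variable {k : ℕ}

instance finite [Finite σ] : Finite (StarSym σ ar k) := by
  let f : StarSym σ ar k →
      ((Σ j : Fin k, Finset (Fin (j.1 + 1))) ⊕
        (Σ j : Fin k, Σ j' : Fin k, Fin (j'.1 + 1) → Fin (j.1 + 1))) ⊕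
      ((Σ R : σ, Finset (Fin (ar R))) ⊕ (Σ R : σ, Σ j : Fin k, Fin (j.1 + 1) → Fin (ar R)))
    | .TS j S => .inl (.inl ⟨j, S⟩)
    | .TI j j' i => .inl (.inr ⟨j, j', i⟩)
    | .RS R S => .inr (.inl ⟨R, S⟩)
    | .RI R j i => .inr (.inr ⟨R, j, i⟩)
  refine Finite.of_injective f ?_
  rintro (⟨⟩ | ⟨⟩ | ⟨⟩ | ⟨⟩) (⟨⟩ | ⟨⟩ | ⟨⟩ | ⟨⟩) h <;> cases h <;> rfl

/-- The sort of the source tuple. -/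
def src : StarSym σ ar k → Fin k ⊕ σ
  | TS j _ => .inl j
  | TI j _ _ => .inl j
  | RS R _ => .inr R
  | RI R _ _ => .inr R

/-- The positions of the source tuple at which its entries are required to agree. -/
def agree : (s : StarSym σ ar k) → Finset (Fin (sortLen ar s.src))
  | TS _ S => S
  | TI _ _ _ => ∅
  | RS _ S => S
  | RI _ _ _ => ∅

/-- The sorts of the subtuples which form the constraint. -/
def sort : (s : StarSym σ ar k) → Fin (starAr s) → Fin k ⊕ σ
  | TS j _ => fun _ => .inl j
  | TI j j' _ => Fin.cases (.inl j) fun _ => .inl j'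
  | RS R _ => fun _ => .inr R
  | RI R j _ => Fin.cases (.inr R) fun _ => .inl j

/-- The positions of the subtuples in the source tuple. -/
def pos : (s : StarSym σ ar k) → (t : Fin (starAr s)) →
    Fin (sortLen ar (s.sort t)) → Fin (sortLen ar s.src)
  | TS _ _ => fun _ => id
  | TI _ _ i => Fin.cases id fun _ => i
  | RS _ _ => fun _ => id
  | RI _ _ i => Fin.cases id fun _ => i

theorem starAr_pos (s : StarSym σ ar k) : 0 < starAr s := by
  cases s <;> simp [starAr]

theorem exists_surjective_pos (s : StarSym σ ar k) : ∃ t, (s.pos t).Surjective :=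
  ⟨⟨0, s.starAr_pos⟩, by cases s <;> exact Function.surjective_id⟩

variable {A B : Type} {AA : Struct σ ar A} {BB : Struct σ ar B}

/-- The possible source tuples of a constraint. -/
def sources (AA : Struct σ ar A) (s : StarSym σ ar k) : Set (Fin (sortLen ar s.src) → A) :=
  {v ∈ (withTuples AA k).rel s.src | ∀ i ∈ s.agree, ∀ i' ∈ s.agree, v i = v i'}

theorem comp_pos_mem_rel {s : StarSym σ ar k} {v : Fin (sortLen ar s.src) → A}
    (hv : v ∈ s.sources AA) (t : Fin (starAr s)) :
    v ∘ s.pos t ∈ (withTuples AA k).rel (s.sort t) := by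
  cases s with
  | TS _ _ => exact hv.1
  | TI _ _ _ => refine Fin.cases hv.1 (fun _ => ?_) t; trivial
  | RS _ _ => exact hv.1
  | RI _ _ _ => refine Fin.cases hv.1 (fun _ => ?_) t; trivial

/-- The tuple of points of `starStruct AA k` with a given source. -/
def points (s : StarSym σ ar k) (v : s.sources AA) (t : Fin (starAr s)) : StarUniv AA k :=
  StarUniv.equivSigma.symm ⟨s.sort t, v.1 ∘ s.pos t, comp_pos_mem_rel v.2 t⟩

theorem points_injective (s : StarSym σ ar k) : (s.points (AA := AA)).Injective := by
  intro v w hvw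
  obtain ⟨t, ht⟩ := s.exists_surjective_pos
  have hcons := StarUniv.equivSigma.symm.injective (congrFun hvw t)
  have hval := congrArg Subtype.val (eq_of_heq (Sigma.mk.inj hcons).2)
  exact Subtype.ext (ht.injective_comp_right hval)

theorem points_apply_eq_iff {s : StarSym σ ar k} {v : s.sources AA} {t : Fin (starAr s)}
    {x : {u // u ∈ (withTuples AA k).rel (s.sort t)}} :
    s.points v t = StarUniv.equivSigma.symm ⟨s.sort t, x⟩ ↔ v.1 ∘ s.pos t = x.1 := by
  rw [points, StarUniv.equivSigma.symm.injective.eq_iff, Sigma.mk.inj_iff, heq_eq_eq,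
    Subtype.ext_iff]
  exact and_iff_right rfl

/-- The sources of the constraints of `starStruct AA k` with a given `t`-th point. -/
def pointsFiberEquiv (AA : Struct σ ar A) {s : StarSym σ ar k} {t : Fin (starAr s)}
    (x : {u // u ∈ (withTuples AA k).rel (s.sort t)}) :
    {v : s.sources AA // s.points v t = StarUniv.equivSigma.symm ⟨s.sort t, x⟩} ≃
      {v : {v // v ∘ s.pos t = x.1} // v.1 ∈ s.sources AA} where
  toFun v := ⟨⟨v.1.1, points_apply_eq_iff.1 v.2⟩, v.1.2⟩
  invFun v := ⟨⟨v.1.1, v.2⟩, points_apply_eq_iff.2 v.1.2⟩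

theorem range_points (s : StarSym σ ar k) :
    Set.range (s.points (AA := AA)) = (starStruct AA k).rel s := by
  ext u
  cases s with
  | TS j S =>
    constructor
    · rintro ⟨v, rfl⟩
      exact ⟨v.1, v.2.2, rfl⟩
    · rintro ⟨v, hv, rfl⟩
      exact ⟨⟨v, trivial, hv⟩, rfl⟩
  | TI j j' i =>
    constructor
    · rintro ⟨v, rfl⟩
      exact ⟨v.1, funext (Fin.forall_fin_two.2 ⟨rfl, rfl⟩)⟩
    · rintro ⟨v, rfl⟩
      exact ⟨⟨v, trivial, by simp [agree]⟩, funext (Fin.forall_fin_two.2 ⟨rfl, rfl⟩)⟩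
  | RS R S =>
    constructor
    · rintro ⟨v, rfl⟩
      exact ⟨v.1, v.2.1, v.2.2, rfl⟩
    · rintro ⟨v, hv, hS, rfl⟩
      exact ⟨⟨v, hv, hS⟩, rfl⟩
  | RI R j i =>
    constructor
    · rintro ⟨v, rfl⟩
      exact ⟨v.1, v.2.1, funext (Fin.forall_fin_two.2 ⟨rfl, rfl⟩)⟩
    · rintro ⟨v, hv, rfl⟩
      exact ⟨⟨v, hv, by simp [agree]⟩, funext (Fin.forall_fin_two.2 ⟨rfl, rfl⟩)⟩

/-- A constraint of `starStruct AA k` is determined by its source. -/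
def relEquiv (s : StarSym σ ar k) : s.sources AA ≃ {u // u ∈ (starStruct AA k).rel s} :=
  (Equiv.ofInjective _ s.points_injective).trans (Equiv.setCongr s.range_points)

end StarSym

theorem sigma_mk_comp_eq_iff {A B N : Type} {AA : Struct σ ar A} {BB : Struct σ ar B}
    {v : N → A} {w : N → B} (hker : ∀ i j, v i = v j ↔ w i = w j) {R R' : σ}
    {f : Fin (ar R) → N} {f' : Fin (ar R') → N} (hv : v ∘ f ∈ AA.rel R) (hv' : v ∘ f' ∈ AA.rel R')
    (hw : w ∘ f ∈ BB.rel R) (hw' : w ∘ f' ∈ BB.rel R') :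
    (⟨R, v ∘ f, hv⟩ : Σ R, {u // u ∈ AA.rel R}) = ⟨R', v ∘ f', hv'⟩ ↔
      (⟨R, w ∘ f, hw⟩ : Σ R, {u // u ∈ BB.rel R}) = ⟨R', w ∘ f', hw'⟩ := by
  by_cases hR : R = R'
  · subst hR
    simp [funext_iff, hker]
  · simp [hR]

section TupleType

variable {A B : Type} [Fintype A] [Fintype B] {k : ℕ} {AA : Struct σ ar A} {BB : Struct σ ar B}

/-- The class of a point of `starStruct AA k`: its sort and the type of its tuple. -/
def starType (x : StarUniv AA k) : Σ s : Fin k ⊕ σ, Setoid (Fin (sortLen ar s)) ×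
    ((Fin k → Fin (sortLen ar s)) → CountTerm σ ar k → ℕ) :=
  ⟨(StarUniv.equivSigma x).1, tupleType k AA (StarUniv.equivSigma x).2.1⟩

theorem starType_equivSigma_symm (c : Σ s, {u // u ∈ (withTuples AA k).rel s}) :
    starType (StarUniv.equivSigma.symm c) = ⟨c.1, tupleType k AA c.2.1⟩ := by
  rw [starType, Equiv.apply_symm_apply]

theorem exists_equiv_starType_eq
    (h : IsBackAndForth k AA BB fun v w => tupleType k AA v = tupleType k BB w)
    (har : ∀ R, ar R ≤ k) : ∃ e : StarUniv AA k ≃ StarUniv BB k, starType ∘ e = starType := by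
  choose Φ hΦ using fun s : Fin k ⊕ σ => h.exists_equiv_sumElim
    (h.of_isEmpty Empty.elim Empty.elim) (Fin (sortLen ar s)) (by simpa using sortLen_le har s)
  have hΦ (s : Fin k ⊕ σ) (v) : tupleType k AA v = tupleType k BB (Φ s v) :=
    tupleType_comp (hΦ s v) .inr
  let e := Equiv.sigmaCongrRight fun s =>
    (Φ s).subtypeEquiv fun v => h.withTuples.rel_iff (hΦ s v)
  refine ⟨StarUniv.equivSigma.trans (e.trans StarUniv.equivSigma.symm), funext fun x => ?_⟩
  obtain ⟨c, rfl⟩ := StarUniv.equivSigma.symm.surjective x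
  simp only [Function.comp_apply, Equiv.trans_apply, Equiv.apply_symm_apply,
    starType_equivSigma_symm]
  exact congrArg (Sigma.mk c.1) (hΦ _ _).symm

namespace StarSym

variable {s : StarSym σ ar k}

theorem mem_sources_iff
    (h : IsBackAndForth k AA BB fun v w => tupleType k AA v = tupleType k BB w)
    {v : Fin (sortLen ar s.src) → A} {w : Fin (sortLen ar s.src) → B}
    (hvw : tupleType k AA v = tupleType k BB w) : v ∈ s.sources AA ↔ w ∈ s.sources BB :=
  and_congr (h.withTuples.rel_iff hvw) <| by simp only [(tupleType_eq_iff.1 hvw).1]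

theorem tupleClass_points {v : s.sources AA} {w : s.sources BB}
    (hvw : tupleType k AA v.1 = tupleType k BB w.1) :
    tupleClass starType (s.points v) = tupleClass starType (s.points w) := by
  refine tupleClass_eq_iff.2 ⟨fun t t' => ?_, fun t => ?_⟩
  · have hker := (tupleType_eq_iff.1 hvw).1
    exact StarUniv.equivSigma.symm.injective.eq_iff.trans <|
      (sigma_mk_comp_eq_iff hker _ _ _ _).trans StarUniv.equivSigma.symm.injective.eq_iff.symm
  · rw [points, points, starType_equivSigma_symm, starType_equivSigma_symm]
    exact congrArg (Sigma.mk (s.sort t)) (tupleType_comp hvw _)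

theorem exists_equiv_points_eq
    (h : IsBackAndForth k AA BB fun v w => tupleType k AA v = tupleType k BB w)
    (har : ∀ R, ar R ≤ k) {t : Fin (starAr s)} {a : StarUniv AA k} {b : StarUniv BB k}
    (hab : starType a = starType b) :
    ∃ Φ : {v : s.sources AA // s.points v t = a} ≃ {w : s.sources BB // s.points w t = b},
      ∀ v, tupleType k AA v.1.1 = tupleType k BB (Φ v).1.1 := by
  obtain ⟨⟨i, x⟩, rfl⟩ := StarUniv.equivSigma.symm.surjective a
  obtain ⟨⟨i', y⟩, rfl⟩ := StarUniv.equivSigma.symm.surjective b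
  rw [starType_equivSigma_symm, starType_equivSigma_symm] at hab
  obtain rfl : i = i' := congrArg Sigma.fst hab
  have hxy : tupleType k AA x.1 = tupleType k BB y.1 := eq_of_heq (Sigma.mk.inj hab).2
  by_cases hs : s.sort t = i
  · subst hs
    obtain ⟨Φ, hΦ⟩ := h.exists_equiv_comp_eq (by simpa using sortLen_le har s.src) hxy
      (tupleType_eq_iff.1 hxy).1 (s.pos t)
    exact ⟨(pointsFiberEquiv AA x).trans
      ((Φ.subtypeEquiv fun v => mem_sources_iff h (hΦ v)).trans (pointsFiberEquiv BB y).symm),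
      fun v => hΦ (pointsFiberEquiv AA x v).1⟩
  · have hA : IsEmpty {v : s.sources AA // s.points v t = StarUniv.equivSigma.symm ⟨i, x⟩} :=
      ⟨fun v => hs (congrArg Sigma.fst (StarUniv.equivSigma.symm.injective v.2))⟩
    have hB : IsEmpty {w : s.sources BB // s.points w t = StarUniv.equivSigma.symm ⟨i, y⟩} :=
      ⟨fun w => hs (congrArg Sigma.fst (StarUniv.equivSigma.symm.injective w.2))⟩
    exact ⟨.equivOfIsEmpty _ _, isEmptyElim⟩

end StarSym

theorem equivK_of_isBackAndForth [Finite σ]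
    (h : IsBackAndForth k AA BB fun v w => tupleType k AA v = tupleType k BB w)
    (har : ∀ R, ar R ≤ k) : EquivK k AA BB := by
  obtain ⟨e, he⟩ := exists_equiv_starType_eq h har
  refine commonEquitable_iff.2 ⟨_, _, _, _, _, _,
    isCommonEquitable_of_exists_equiv StarSym.starAr_pos he fun s t a b hab => ?_⟩
  obtain ⟨Φ, hΦ⟩ := StarSym.exists_equiv_points_eq h har hab
  let fiberEquiv {C : Type} {CC : Struct σ ar C} (c : StarUniv CC k) :
      {v : s.sources CC // s.points v t = c} ≃
        {u : {u // u ∈ (starStruct CC k).rel s} // u.1 t = c} :=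
    s.relEquiv.subtypeEquiv fun v => Iff.rfl
  refine ⟨(fiberEquiv a).symm.trans (Φ.trans (fiberEquiv b)), fun u => ?_⟩
  obtain ⟨v, rfl⟩ := (fiberEquiv a).surjective u
  rw [Equiv.trans_apply, Equiv.symm_apply_apply]
  exact (StarSym.tupleClass_points (hΦ v)).symm

end TupleType

theorem stmt4 [Fintype σ] {A B : Type} [Fintype A] [Fintype B] (k : ℕ) (hk : 1 ≤ k)
    (har : ∀ R : σ, ar R ≤ k) (AA : Struct σ ar A) (BB : Struct σ ar B) :
    EquivK k AA BB ↔
      ∀ (Q : Type) (_ : Fintype Q) (QQ : Struct σ ar Q),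
        HasTreewidthLT QQ k → homCount QQ AA = homCount QQ BB := by
  constructor
  · intro h Q _ QQ hQ
    obtain ⟨I, J, pA, qA, pB, qB, hpq⟩ := commonEquitable_iff.1 h
    exact (hpq.isBackAndForth har).homCount_eq hk hQ
  · intro h
    exact equivK_of_isBackAndForth (isBackAndForth_tupleType hk har h) har

end
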